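/- arXiv:1205.6298 — 7 statements merged into one kernel-verified Lean document; each statement's English description precedes it below -/
import Mathlib

section
/- Let (ψ_i) be a sequence of C¹ functions ψ_i : D → ℂ on the open unit disc such that ‖ψ_i‖_{L¹(D)} + ‖∂_z̄ ψ_i‖_{L¹(D)} ≤ C for all i, for some constant C < ∞. Then there exists ψ_∞ ∈ L¹(D_{1/2}, ℂ) such that, after passing to a subsequence, ψ_i → ψ_∞ in L¹(D_{1/2}, ℂ). Moreover, if in addition ‖∂_z̄ ψ_i‖_{L¹(D)} → 0 as i → ∞, then ψ_∞ agrees almost everywhere on D_{1/2} with a holomorphic function on D_{1/2}. -/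
/-!
Fix a smooth cutoff `χ`, equal to `1` on `D_{3/4}` and compactly supported in `D`. For a `C¹`
function `ψ` on `D`, the Cauchy–Pompeiu formula (`cauchy_pompeiu`) applied to `χψ` gives, on
`D_{1/2}`,
  `ψ = K * (a + b)`, with `K(z) = 1/(πz)`, `a = χ ∂_z̄ψ` and `b = ψ ∂_z̄χ`.
The sources `a + b` are bounded in `L¹` by the hypothesis, and only the restriction of `K` to `D_2`
matters, which is integrable (`exists_decomposition`, `truncKer_integrable`).

Compactness: approximate the truncated kernel in `L¹` by a continuous compactly supported kernel
`l`. By Young's inequality this changes `ψ_i` little in `L¹`, uniformly in `i`, while the functions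
`l * (a_i + b_i)` are uniformly bounded and equicontinuous, so Arzelà–Ascoli provides finite nets.
Hence `(ψ_i)` is totally bounded in `L¹(D_{1/2})` (`exists_L1_net`) and subconverges.

Holomorphy: if `‖∂_z̄ψ_i‖₁ → 0` then `K * a_i → 0` in `L¹(D_{1/2})`, so the limit is also the `L¹`
limit of `K * b_i`. The `b_i` live in the annulus `3/4 ≤ |w| < 1`, so the `K * b_i` are holomorphic
on `D_{1/2}`, uniformly bounded and uniformly Lipschitz there; a further subsequence converges
uniformly to a holomorphic function (`exists_holomorphic_subseq`), which equals the limit a.e.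
-/

open MeasureTheory Metric Filter

/-- The Wirtinger derivative `∂_z̄ ψ := ½(∂ψ/∂x + i ∂ψ/∂y)` of a function `ψ : ℂ → ℂ`. -/
noncomputable def dbar (ψ : ℂ → ℂ) (z : ℂ) : ℂ :=
  (1 / 2) * (fderiv ℝ ψ z 1 + Complex.I * fderiv ℝ ψ z Complex.I)

/-! ### The Cauchy–Pompeiu formula -/

/-- The point `e^{iθ}`, written as in `Complex.polarCoord_symm_apply`. -/
noncomputable def dir (θ : ℝ) : ℂ := (Real.cos θ : ℂ) + (Real.sin θ : ℂ) * Complex.I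

lemma dir_continuous : Continuous dir := by unfold dir; fun_prop

lemma norm_dir (θ : ℝ) : ‖dir θ‖ = 1 := by
  have h : dir θ = Complex.exp (θ * Complex.I) := by
    rw [Complex.exp_mul_I]; simp [dir]
  rw [h, Complex.norm_exp_ofReal_mul_I]

lemma dir_ne_zero (θ : ℝ) : dir θ ≠ 0 := by
  intro h; have := norm_dir θ; simp [h] at this

lemma hasDerivAt_dir (θ : ℝ) : HasDerivAt dir (Complex.I * dir θ) θ := by
  have h1 := (Real.hasDerivAt_cos θ).ofReal_comp
  have h2 := ((Real.hasDerivAt_sin θ).ofReal_comp).mul_const Complex.I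
  refine (h1.add h2).congr_deriv ?_
  simp only [dir]
  push_cast
  linear_combination (-Complex.sin θ) * Complex.I_sq

/-- The polar form `∂_z̄ = (e^{iθ}/2)(∂_r + (i/r) ∂_θ)`. -/
lemma dbar_polar (v : ℂ → ℂ) (z : ℂ) (θ : ℝ) :
    (dir θ)⁻¹ * dbar v z =
      (1 / 2) * (fderiv ℝ v z (dir θ) + Complex.I * fderiv ℝ v z (Complex.I * dir θ)) := by
  have h1 : dir θ = Real.cos θ • (1 : ℂ) + Real.sin θ • Complex.I := by
    simp [dir]
  have h2 : Complex.I * dir θ = Real.cos θ • Complex.I + (- Real.sin θ) • (1 : ℂ) := by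
    simp only [dir, Complex.real_smul]; push_cast; linear_combination (Complex.sin θ) * Complex.I_sq
  rw [inv_mul_eq_iff_eq_mul₀ (dir_ne_zero θ), h2, h1, map_add, map_add]
  simp only [map_smul]
  simp only [dbar, Complex.real_smul, mul_one]
  push_cast
  have := Complex.sin_sq_add_cos_sq (θ : ℂ)
  have hI := Complex.I_sq
  generalize (fderiv ℝ v z) 1 = a
  generalize (fderiv ℝ v z) Complex.I = b
  generalize Complex.sin θ = s at *
  generalize Complex.cos θ = c at *
  generalize Complex.I = i at *
  linear_combination (1 / 2) * (-(a + i * b)) * this + (1 / 2) * (a * s ^ 2 - b * c * s) * hI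

lemma polar_integrable {G : ℝ × ℝ → ℂ} (hG : Continuous G) {R : ℝ}
    (hR : ∀ p : ℝ × ℝ, R < p.1 → G p = 0) :
    IntegrableOn G (Set.Ioi 0 ×ˢ Set.Ioo (-Real.pi) Real.pi) (volume.prod volume) := by
  have h1 : IntegrableOn G (Set.Icc 0 R ×ˢ Set.Icc (-Real.pi) Real.pi)
      (volume.prod volume) :=
    hG.continuousOn.integrableOn_compact (isCompact_Icc.prod isCompact_Icc)
  refine h1.of_forall_sdiff_eq_zero (measurableSet_Ioi.prod measurableSet_Ioo) ?_
  rintro ⟨r, θ⟩ ⟨⟨hr, hθ⟩, hn⟩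
  refine hR _ ?_
  by_contra hc
  exact hn ⟨⟨le_of_lt hr, not_lt.1 hc⟩, ⟨hθ.1.le, hθ.2.le⟩⟩

lemma exists_support_radius {v : ℂ → ℂ} (hc : HasCompactSupport v) :
    ∃ R : ℝ, 0 < R ∧ ∀ z, R < ‖z‖ → v z = 0 ∧ fderiv ℝ v z = 0 := by
  obtain ⟨R, hR⟩ := hc.isCompact.isBounded.subset_closedBall (0 : ℂ)
  refine ⟨max R 1, by positivity, fun z hz => ?_⟩
  have hz' : z ∉ tsupport v := fun h => by
    have := hR h
    rw [mem_closedBall_zero_iff] at this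
    exact absurd hz (not_lt.2 (this.trans (le_max_left _ _)))
  exact ⟨image_eq_zero_of_notMem_tsupport hz',
    image_eq_zero_of_notMem_tsupport (fun h => hz' (tsupport_fderiv_subset ℝ h))⟩

/-- The `∂_r` term: integrate along a ray, where `v` vanishes far out. -/
lemma radial_part {v : ℂ → ℂ} (hv : ContDiff ℝ 1 v) (hc : HasCompactSupport v) (θ : ℝ) :
    ∫ r in Set.Ioi (0 : ℝ), fderiv ℝ v (r * dir θ) (dir θ) = - v 0 := by
  obtain ⟨R, hR0, hR⟩ := exists_support_radius hc
  have hcd : ContDiff ℝ 1 (fun r : ℝ => v (r * dir θ)) :=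
    hv.comp (by
      have : ContDiff ℝ 1 (fun r : ℝ => (r : ℂ)) := Complex.ofRealCLM.contDiff
      exact this.mul contDiff_const)
  have hcs : HasCompactSupport (fun r : ℝ => v (r * dir θ)) := by
    refine HasCompactSupport.of_support_subset_isCompact (isCompact_Icc (a := -R) (b := R)) ?_
    intro r hr
    rw [Set.mem_Icc, ← abs_le]
    by_contra h
    refine hr (hR _ ?_).1
    simpa [norm_dir] using h
  have := hcs.integral_Ioi_deriv_eq hcd 0
  simp only [Complex.ofReal_zero, zero_mul] at this
  rw [← this]
  congr 1
  ext r
  have h1 : HasDerivAt (fun r : ℝ => (r : ℂ) * dir θ) (dir θ) r := by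
    simpa using (Complex.ofRealCLM.hasDerivAt (x := r)).mul_const (dir θ)
  have h2 := (hv.differentiable one_ne_zero ((r : ℂ) * dir θ)).hasFDerivAt
  exact ((h2.comp_hasDerivAt r h1).deriv).symm

/-- The `(1/r) ∂_θ` term integrates to zero over a circle, by periodicity. -/
lemma angular_part {v : ℂ → ℂ} (hv : ContDiff ℝ 1 v) {r : ℝ} (hr : 0 < r) :
    ∫ θ in Set.Ioo (-Real.pi) Real.pi, fderiv ℝ v (r * dir θ) (Complex.I * dir θ) = 0 := by
  have hd : ∀ θ : ℝ, HasDerivAt (fun θ : ℝ => v (r * dir θ))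
      ((r : ℂ) * fderiv ℝ v (r * dir θ) (Complex.I * dir θ)) θ := by
    intro θ
    have h1 : HasDerivAt (fun θ : ℝ => (r : ℂ) * dir θ) (r * (Complex.I * dir θ)) θ :=
      (hasDerivAt_dir θ).const_mul _
    have h2 := (hv.differentiable one_ne_zero ((r : ℂ) * dir θ)).hasFDerivAt
    refine (h2.comp_hasDerivAt θ h1).congr_deriv ?_
    rw [← Complex.real_smul (x := r) (z := Complex.I * dir θ), map_smul, Complex.real_smul]
  have hcont : Continuous (fun θ : ℝ => fderiv ℝ v (r * dir θ) (Complex.I * dir θ)) := by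
    have := hv.continuous_fderiv one_ne_zero
    have := dir_continuous
    fun_prop
  have h3 := intervalIntegral.integral_eq_sub_of_hasDerivAt (a := -Real.pi) (b := Real.pi)
    (fun θ _ => hd θ) ((continuous_const.mul hcont).intervalIntegrable _ _)
  have h4 : dir Real.pi = dir (-Real.pi) := by simp [dir]
  rw [h4, sub_self, intervalIntegral.integral_const_mul] at h3
  rw [← integral_Ioc_eq_integral_Ioo, ← intervalIntegral.integral_of_le (by linarith [Real.pi_pos])]
  have hrne : (r : ℂ) ≠ 0 := by exact_mod_cast hr.ne'
  exact (mul_eq_zero.1 h3).resolve_left hrne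

/-- The Cauchy–Pompeiu formula at the origin. In polar coordinates the Jacobian `r` cancels the
singularity of `1/z`, leaving `½(∂_r + (i/r) ∂_θ) v`, whose two terms are integrated separately. -/
lemma cauchy_pompeiu_zero {v : ℂ → ℂ} (hv : ContDiff ℝ 1 v) (hc : HasCompactSupport v) :
    ∫ z, z⁻¹ * dbar v z = - (Real.pi * v 0) := by
  obtain ⟨R, hR0, hR⟩ := exists_support_radius hc
  have hfc := hv.continuous_fderiv one_ne_zero
  have hdc := dir_continuous
  rw [← Complex.integral_comp_polarCoord_symm, polarCoord_target]
  set S : Set (ℝ × ℝ) := Set.Ioi 0 ×ˢ Set.Ioo (-Real.pi) Real.pi with hS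
  have hSm : MeasurableSet S := measurableSet_Ioi.prod measurableSet_Ioo
  let G1 : ℝ × ℝ → ℂ := fun p => fderiv ℝ v (p.1 * dir p.2) (dir p.2)
  let G2 : ℝ × ℝ → ℂ := fun p => fderiv ℝ v (p.1 * dir p.2) (Complex.I * dir p.2)
  have hG1 : IntegrableOn G1 S (volume.prod volume) := by
    refine polar_integrable (by fun_prop) (R := R) fun p hp => ?_
    have : R < ‖(p.1 : ℂ) * dir p.2‖ := by
      simpa [norm_dir] using lt_of_lt_of_le hp (le_abs_self _)
    simp only [G1, (hR _ this).2]; simp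
  have hG2 : IntegrableOn G2 S (volume.prod volume) := by
    refine polar_integrable (by fun_prop) (R := R) fun p hp => ?_
    have : R < ‖(p.1 : ℂ) * dir p.2‖ := by
      simpa [norm_dir] using lt_of_lt_of_le hp (le_abs_self _)
    simp only [G2, (hR _ this).2]; simp
  have h1 : ∫ p in S, p.1 • ((Complex.polarCoord.symm p)⁻¹ * dbar v (Complex.polarCoord.symm p))
      = ∫ p in S, ((1 / 2) * (G1 p + Complex.I * G2 p)) := by
    refine setIntegral_congr_fun hSm fun p hp => ?_
    have hp1 : (p.1 : ℂ) ≠ 0 := by exact_mod_cast (ne_of_gt hp.1)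
    have hpc : Complex.polarCoord.symm p = p.1 * dir p.2 := Complex.polarCoord_symm_apply p
    simp only [hpc, G1, G2]
    rw [← dbar_polar, Complex.real_smul, mul_inv]
    field_simp
  rw [h1, integral_const_mul, Measure.volume_eq_prod,
    integral_add hG1 (hG2.const_mul _), integral_const_mul]
  have h2 : ∫ p in S, G2 p ∂(volume.prod volume) = 0 := by
    rw [hS, setIntegral_prod _ hG2]
    rw [setIntegral_congr_fun (g := fun _ => (0 : ℂ)) measurableSet_Ioi
      (fun r hr => angular_part hv hr)]
    simp
  have h3 : ∫ p in S, G1 p ∂(volume.prod volume) = - (2 * Real.pi * v 0) := by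
    rw [hS, ← Measure.prod_restrict,
      integral_prod_symm _ (by rw [Measure.prod_restrict]; exact hG1)]
    rw [setIntegral_congr_fun (g := fun _ => - v 0) measurableSet_Ioo
      (fun θ _ => radial_part hv hc θ)]
    rw [setIntegral_const,
      Real.volume_real_Ioo_of_le (show -Real.pi ≤ Real.pi by linarith [Real.pi_pos]),
      Complex.real_smul]
    push_cast
    ring
  rw [h2, h3]
  ring

/-- The Cauchy kernel `1/(πz)`, the fundamental solution of `∂_z̄`. -/
noncomputable def cauchyKer (z : ℂ) : ℂ := (Real.pi * z)⁻¹

/-- The **Cauchy–Pompeiu formula** for compactly supported `C¹` functions. -/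
lemma cauchy_pompeiu {u : ℂ → ℂ} (hu : ContDiff ℝ 1 u) (hc : HasCompactSupport u) (z : ℂ) :
    ∫ w, cauchyKer (z - w) * dbar u w = u z := by
  have hv : ContDiff ℝ 1 (fun w => u (z + w)) := hu.comp (contDiff_const.add contDiff_id)
  have hcv : HasCompactSupport (fun w => u (z + w)) :=
    hc.comp_homeomorph (Homeomorph.addLeft z)
  have h := cauchy_pompeiu_zero hv hcv
  have hd : ∀ w, dbar (fun w => u (z + w)) w = dbar u (z + w) := by
    intro w
    simp only [dbar, fderiv_comp_add_left]
  rw [← integral_add_left_eq_self _ z]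
  simp only [hd, add_zero] at h
  have h2 : ∀ w, cauchyKer (z - (z + w)) * dbar u (z + w)
      = (-(Real.pi : ℂ)⁻¹) * (w⁻¹ * dbar u (z + w)) := by
    intro w
    rw [cauchyKer, show z - (z + w) = -w by ring, mul_neg, inv_neg, mul_inv]
    ring
  simp only [h2]
  rw [integral_const_mul, h]
  have : (Real.pi : ℂ) ≠ 0 := by exact_mod_cast Real.pi_ne_zero
  field_simp

/-! ### The truncated Cauchy kernel -/

/-- The Cauchy kernel cut off to `D_2`. It has the same effect as the full kernel when
convolving functions supported in `D` and evaluating on `D`, and it is integrable. -/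
noncomputable def truncKer : ℂ → ℂ := (ball (0 : ℂ) 2).indicator cauchyKer

lemma cauchyKer_measurable : Measurable cauchyKer := by unfold cauchyKer; fun_prop

lemma truncKer_measurable : Measurable truncKer :=
  cauchyKer_measurable.indicator measurableSet_ball

lemma truncKer_integrable : Integrable truncKer := by
  refine ⟨truncKer_measurable.aestronglyMeasurable, ?_⟩
  rw [hasFiniteIntegral_iff_enorm, ← Complex.lintegral_comp_polarCoord_symm, polarCoord_target]
  set S : Set (ℝ × ℝ) := Set.Ioi 0 ×ˢ Set.Ioo (-Real.pi) Real.pi with hS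
  set T : Set (ℝ × ℝ) := Set.Icc 0 2 ×ˢ Set.Icc (-Real.pi) Real.pi with hT
  have hTm : MeasurableSet T := measurableSet_Icc.prod measurableSet_Icc
  calc ∫⁻ p in S, ENNReal.ofReal p.1 • ‖truncKer (Complex.polarCoord.symm p)‖ₑ
      ≤ ∫⁻ p in S, T.indicator (fun _ => 1) p := by
        refine setLIntegral_mono (measurable_const.indicator hTm) fun p hp => ?_
        have hp0 : 0 < p.1 := hp.1
        by_cases h : p.1 < 2
        · have hpT : p ∈ T := ⟨⟨hp0.le, h.le⟩, ⟨hp.2.1.le, hp.2.2.le⟩⟩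
          rw [Set.indicator_of_mem hpT, ← ofReal_norm, smul_eq_mul,
            ← ENNReal.ofReal_mul hp0.le, ENNReal.ofReal_le_one]
          have : ‖truncKer (Complex.polarCoord.symm p)‖ ≤ (Real.pi * p.1)⁻¹ := by
            refine (norm_indicator_le_norm_self _ _).trans ?_
            rw [cauchyKer, norm_inv, norm_mul, Complex.norm_polarCoord_symm, Complex.norm_real,
              Real.norm_of_nonneg Real.pi_pos.le, abs_of_pos hp0]
          calc p.1 * _ ≤ p.1 * (Real.pi * p.1)⁻¹ := by gcongr
            _ = Real.pi⁻¹ := by field_simp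
            _ ≤ 1 := inv_le_one_of_one_le₀ (by linarith [Real.pi_gt_three])
        · rw [truncKer, Set.indicator_of_notMem]
          · simp
          · rw [mem_ball_zero_iff, Complex.norm_polarCoord_symm, abs_of_pos hp0]
            exact h
    _ ≤ ∫⁻ p, T.indicator (fun _ => 1) p := setLIntegral_le_lintegral _ _
    _ = volume T := by rw [lintegral_indicator hTm]; simp
    _ < ⊤ := (isCompact_Icc.prod isCompact_Icc).measure_lt_top

lemma truncKer_eq {z w : ℂ} (hz : z ∈ closedBall (0 : ℂ) (1 / 2))
    (hw : w ∈ ball (0 : ℂ) 1) :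
    truncKer (z - w) = cauchyKer (z - w) := by
  refine Set.indicator_of_mem ?_ _
  rw [mem_ball_zero_iff] at *
  rw [mem_closedBall_zero_iff] at hz
  linarith [norm_sub_le z w]

/-! ### Localisation -/

/-- A continuous function on `ℂ` vanishing outside the unit disc. -/
def DiscSource (f : ℂ → ℂ) : Prop := Continuous f ∧ ∀ w, w ∉ ball (0 : ℂ) 1 → f w = 0

lemma DiscSource.hasCompactSupport {f : ℂ → ℂ} (hf : DiscSource f) : HasCompactSupport f :=
  HasCompactSupport.intro (isCompact_closedBall (0 : ℂ) 1)
    fun w hw => hf.2 w fun h => hw (ball_subset_closedBall h)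

lemma DiscSource.integrable {f : ℂ → ℂ} (hf : DiscSource f) : Integrable f :=
  hf.1.integrable_of_hasCompactSupport hf.hasCompactSupport

lemma DiscSource.add {f g : ℂ → ℂ} (hf : DiscSource f) (hg : DiscSource g) :
    DiscSource (fun w => f w + g w) :=
  ⟨hf.1.add hg.1, fun w hw => by simp [hf.2 w hw, hg.2 w hw]⟩

/-- The product is smooth on all of `ℂ`, whatever the values of `g` outside `U`. -/
lemma contDiff_cutoff_mul {n : WithTop ℕ∞} {χ g : ℂ → ℂ} {U : Set ℂ} (hU : IsOpen U)
    (hχ : ContDiff ℝ n χ) (hs : tsupport χ ⊆ U) (hg : ContDiffOn ℝ n g U) :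
    ContDiff ℝ n (fun z => χ z * g z) := by
  rw [contDiff_iff_contDiffAt]
  intro z
  by_cases hz : z ∈ U
  · exact hχ.contDiffAt.mul (hg.contDiffAt (hU.mem_nhds hz))
  · have h0 : χ =ᶠ[nhds z] 0 := notMem_tsupport_iff_eventuallyEq.1 fun h => hz (hs h)
    refine (contDiffAt_const (c := (0 : ℂ))).congr_of_eventuallyEq ?_
    filter_upwards [h0] with w hw
    simp [hw]

lemma dbar_mul {χ g : ℂ → ℂ} {z : ℂ} (hχ : DifferentiableAt ℝ χ z)
    (hg : DifferentiableAt ℝ g z) :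
    dbar (fun w => χ w * g w) z = χ z * dbar g z + g z * dbar χ z := by
  have h : fderiv ℝ (fun w => χ w * g w) z = χ z • fderiv ℝ g z + g z • fderiv ℝ χ z :=
    fderiv_mul hχ hg
  simp only [dbar, h, add_apply, smul_apply, smul_eq_mul]
  ring

lemma continuous_dbar {u : ℂ → ℂ} (hu : ContDiff ℝ 1 u) : Continuous (dbar u) := by
  have := hu.continuous_fderiv one_ne_zero
  unfold dbar
  fun_prop

lemma dbar_eq_zero {u : ℂ → ℂ} {z : ℂ} (h : fderiv ℝ u z = 0) : dbar u z = 0 := by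
  simp [dbar, h]

/-- Localisation: with a fixed cutoff `χ`, a `C¹` function `φ` on `D` is, on `D_{1/2}`, the
Cauchy transform of `∂_z̄(χφ) = a + b` where `a = χ ∂_z̄φ` and `b = φ ∂_z̄χ`. The function `b`
lives in an annulus away from `D_{1/2}`, and `M` bounds `|∂_z̄χ|`. -/
lemma exists_decomposition : ∃ M : NNReal, ∀ φ : ℂ → ℂ, ContDiffOn ℝ 1 φ (ball (0 : ℂ) 1) →
    ∃ a b : ℂ → ℂ, DiscSource a ∧ DiscSource b ∧ (∀ w ∈ ball (0 : ℂ) (3 / 4), b w = 0) ∧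
      (∀ z ∈ ball (0 : ℂ) (1 / 2), φ z = ∫ w, cauchyKer (z - w) * (a w + b w)) ∧
      (∫⁻ w, ‖a w‖ₑ) ≤ ∫⁻ w in ball (0 : ℂ) 1, ‖dbar φ w‖ₑ ∧
      (∫⁻ w, ‖b w‖ₑ) ≤ M * ∫⁻ w in ball (0 : ℂ) 1, ‖φ w‖ₑ := by
  let β : ContDiffBump (0 : ℂ) := ⟨3 / 4, 7 / 8, by norm_num, by norm_num⟩
  let χ : ℂ → ℂ := fun z => ((β z : ℝ) : ℂ)
  have hχ : ContDiff ℝ 1 χ := Complex.ofRealCLM.contDiff.comp β.contDiff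
  have hχs : tsupport χ ⊆ closedBall 0 (7 / 8) := by
    have : tsupport χ ⊆ tsupport β := tsupport_comp_subset (g := fun x : ℝ => (x : ℂ)) (by simp) _
    exact this.trans β.tsupport_eq.subset
  have hcb : closedBall (0 : ℂ) (7 / 8) ⊆ ball 0 1 := closedBall_subset_ball (by norm_num)
  have hχc : HasCompactSupport χ :=
    HasCompactSupport.of_support_subset_isCompact (isCompact_closedBall (0 : ℂ) (7 / 8))
      ((subset_tsupport χ).trans hχs)
  have hχ1 : ∀ z, ‖χ z‖ ≤ 1 := fun z => by
    simp only [χ, Complex.norm_real, Real.norm_eq_abs, abs_of_nonneg β.nonneg]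
    exact β.le_one
  have hdχ : Continuous (dbar χ) := continuous_dbar hχ
  have hdsupp : Function.support (dbar χ) ⊆ tsupport χ := by
    intro z hz
    by_contra h
    exact hz (dbar_eq_zero
      (image_eq_zero_of_notMem_tsupport fun h' => h (tsupport_fderiv_subset ℝ h')))
  have hdts : tsupport (dbar χ) ⊆ tsupport χ := closure_minimal hdsupp (isClosed_tsupport χ)
  have hdc : HasCompactSupport (dbar χ) := hχc.mono' hdsupp
  obtain ⟨M, hM⟩ := hdχ.bounded_above_of_compact_support hdc
  refine ⟨M.toNNReal, fun φ hφ => ?_⟩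
  have hu : ContDiff ℝ 1 (fun z => χ z * φ z) :=
    contDiff_cutoff_mul isOpen_ball hχ (hχs.trans hcb) hφ
  have huc : HasCompactSupport (fun z => χ z * φ z) := hχc.mul_right
  have hb : Continuous (fun z => dbar χ z * φ z) :=
    contDiff_zero.1 (contDiff_cutoff_mul (n := 0) isOpen_ball (contDiff_zero.2 hdχ)
      (hdts.trans (hχs.trans hcb)) (hφ.of_le zero_le_one))
  have hdb : ∀ z ∈ ball (0 : ℂ) 1,
      dbar (fun z => χ z * φ z) z - dbar χ z * φ z = χ z * dbar φ z := by
    intro z hz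
    rw [dbar_mul (hχ.differentiable one_ne_zero z)
      ((hφ.contDiffAt (isOpen_ball.mem_nhds hz)).differentiableAt one_ne_zero)]
    ring
  have hb0 : ∀ w, w ∉ ball (0 : ℂ) 1 → dbar χ w * φ w = 0 := by
    intro w hw
    have : dbar χ w = 0 := by
      by_contra h
      exact hw (hcb (hχs (hdsupp h)))
    simp [this]
  have ha0 : ∀ w, w ∉ ball (0 : ℂ) 1 → dbar (fun z => χ z * φ z) w - dbar χ w * φ w = 0 := by
    intro w hw
    rw [hb0 w hw, sub_zero]
    refine dbar_eq_zero (image_eq_zero_of_notMem_tsupport fun h' => ?_)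
    have h2 : tsupport (fun z => χ z * φ z) ⊆ tsupport χ := tsupport_mul_subset_left
    exact hw (hcb (hχs (h2 (tsupport_fderiv_subset ℝ h'))))
  refine ⟨fun z => dbar (fun z => χ z * φ z) z - dbar χ z * φ z, fun z => dbar χ z * φ z,
    ⟨(continuous_dbar hu).sub hb, ha0⟩, ⟨hb, hb0⟩, ?_, ?_, ?_, ?_⟩
  · intro w hw
    have h1 : χ =ᶠ[nhds w] fun _ => 1 := by
      filter_upwards [isOpen_ball.mem_nhds hw] with y hy
      simp only [χ, β.one_of_mem_closedBall (ball_subset_closedBall hy), Complex.ofReal_one]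
    have h2 : dbar χ w = 0 := dbar_eq_zero (by rw [h1.fderiv_eq]; simp)
    simp [h2]
  · intro z hz
    have h := cauchy_pompeiu hu huc z
    simp only [sub_add_cancel]
    rw [h]
    have hz' : z ∈ closedBall (0 : ℂ) (3 / 4) :=
      closedBall_subset_closedBall (by norm_num) (ball_subset_closedBall hz)
    simp only [χ, β.one_of_mem_closedBall hz', Complex.ofReal_one, one_mul]
  · rw [← lintegral_indicator measurableSet_ball]
    refine lintegral_mono fun w => ?_
    by_cases hw : w ∈ ball (0 : ℂ) 1
    · rw [Set.indicator_of_mem hw]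
      simp only [hdb w hw, enorm_mul]
      refine mul_le_of_le_one_left' ?_
      rw [← ofReal_norm, ENNReal.ofReal_le_one]
      exact hχ1 w
    · simp [ha0 w hw]
  · rw [← lintegral_const_mul' _ _ ENNReal.coe_ne_top, ← lintegral_indicator measurableSet_ball]
    refine lintegral_mono fun w => ?_
    by_cases hw : w ∈ ball (0 : ℂ) 1
    · rw [Set.indicator_of_mem hw]
      simp only [enorm_mul]
      gcongr
      rw [← ofReal_norm]
      exact ENNReal.ofReal_le_ofReal (hM w)
    · simp [hb0 w hw]

/-! ### Convolution estimates -/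

/-- The convolution `k * f` on `ℂ`. -/
noncomputable def conv (k f : ℂ → ℂ) (z : ℂ) : ℂ := ∫ w, k (z - w) * f w

lemma conv_integrable {k f : ℂ → ℂ} (hk : Integrable k) (hf : DiscSource f) (z : ℂ) :
    Integrable (fun w => k (z - w) * f w) := by
  obtain ⟨M, hM⟩ := hf.1.bounded_above_of_compact_support hf.hasCompactSupport
  exact (hk.comp_sub_left z).mul_bdd hf.1.aestronglyMeasurable (ae_of_all _ hM)

/-- Young's inequality `‖k * f‖₁ ≤ ‖k‖₁ ‖f‖₁`. -/
lemma lintegral_conv_le {k f : ℂ → ℂ} (hk : Measurable k) (hf : Measurable f) :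
    ∫⁻ z, ‖conv k f z‖ₑ ≤ (∫⁻ z, ‖k z‖ₑ) * ∫⁻ w, ‖f w‖ₑ := by
  calc ∫⁻ z, ‖conv k f z‖ₑ ≤ ∫⁻ z, ∫⁻ w, ‖k (z - w)‖ₑ * ‖f w‖ₑ := by
        refine lintegral_mono fun z => ?_
        refine (enorm_integral_le_lintegral_enorm _).trans ?_
        simp only [enorm_mul, le_refl]
    _ = ∫⁻ w, ∫⁻ z, ‖k (z - w)‖ₑ * ‖f w‖ₑ := by
        refine lintegral_lintegral_swap ?_
        refine Measurable.aemeasurable ?_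
        simp only [Function.uncurry_def]
        fun_prop
    _ = ∫⁻ w, (∫⁻ z, ‖k z‖ₑ) * ‖f w‖ₑ := by
        refine lintegral_congr fun w => ?_
        rw [lintegral_mul_const _ (by fun_prop),
          lintegral_sub_right_eq_self (fun z => ‖k z‖ₑ) w]
    _ = _ := by rw [lintegral_const_mul _ (by fun_prop)]

lemma norm_integral_mul_le {k f : ℂ → ℂ} (hf : Integrable f) {B : ℝ}
    (hB : ∀ w, f w ≠ 0 → ‖k w‖ ≤ B) : ‖∫ w, k w * f w‖ ≤ B * ∫ w, ‖f w‖ := by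
  rw [← integral_const_mul]
  refine norm_integral_le_of_norm_le (hf.norm.const_mul B) (ae_of_all _ fun w => ?_)
  by_cases h : f w = 0
  · simp [h]
  · rw [norm_mul]
    gcongr
    exact hB w h

lemma conv_sub_bound {k f : ℂ → ℂ} (hf : Integrable f) {z z' : ℂ} {B : ℝ}
    (h1 : Integrable (fun w => k (z - w) * f w)) (h2 : Integrable (fun w => k (z' - w) * f w))
    (hB : ∀ w, f w ≠ 0 → ‖k (z - w) - k (z' - w)‖ ≤ B) :
    dist (conv k f z) (conv k f z') ≤ B * ∫ w, ‖f w‖ := by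
  rw [dist_eq_norm, conv, conv, ← integral_sub h1 h2]
  simp only [← sub_mul]
  exact norm_integral_mul_le hf hB

/-! ### Compactness in the uniform norm and in `L¹` -/

/-- Arzelà–Ascoli for a sequence on the closed disc of radius `1/2`; the `G i` are the
restrictions of the `g i`. -/
lemma arzela_ascoli_seq {g : ℕ → ℂ → ℂ} {B : ℝ}
    (hB : ∀ i, ∀ z ∈ closedBall (0 : ℂ) (1 / 2), ‖g i z‖ ≤ B)
    (heq : ∀ ε > 0, ∃ δ > 0, ∀ i, ∀ z ∈ closedBall (0 : ℂ) (1 / 2),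
      ∀ z' ∈ closedBall (0 : ℂ) (1 / 2), dist z z' < δ → dist (g i z) (g i z') ≤ ε) :
    ∃ G : ℕ → BoundedContinuousFunction (closedBall (0 : ℂ) (1 / 2)) ℂ,
      (∀ i z, G i z = g i z) ∧ IsCompact (closure (Set.range G)) := by
  have : CompactSpace (closedBall (0 : ℂ) (1 / 2)) :=
    isCompact_iff_compactSpace.1 (isCompact_closedBall _ _)
  have hcont : ∀ i, Continuous (fun z : closedBall (0 : ℂ) (1 / 2) => g i z) := by
    intro i
    rw [Metric.continuous_iff]
    intro z ε hε
    obtain ⟨δ, hδ, h⟩ := heq (ε / 2) (half_pos hε)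
    exact ⟨δ, hδ, fun y hy => (h i y y.2 z z.2 hy).trans_lt (half_lt_self hε)⟩
  refine ⟨fun i => BoundedContinuousFunction.mkOfCompact ⟨_, hcont i⟩, fun i z => rfl, ?_⟩
  refine BoundedContinuousFunction.arzela_ascoli (closedBall 0 B) (isCompact_closedBall _ _) _ ?_ ?_
  · rintro _ z ⟨i, rfl⟩
    rw [mem_closedBall_zero_iff]
    exact hB i z z.2
  · intro z
    rw [Metric.equicontinuousAt_iff]
    intro ε hε
    obtain ⟨δ, hδ, h⟩ := heq (ε / 2) (half_pos hε)
    refine ⟨δ, hδ, fun y hy => ?_⟩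
    rintro ⟨_, i, rfl⟩
    exact (h i z z.2 y y.2 (by rw [dist_comm]; exact hy)).trans_lt (half_lt_self hε)

lemma exists_finite_net {g : ℕ → ℂ → ℂ} {B : ℝ}
    (hB : ∀ i, ∀ z ∈ closedBall (0 : ℂ) (1 / 2), ‖g i z‖ ≤ B)
    (heq : ∀ ε > 0, ∃ δ > 0, ∀ i, ∀ z ∈ closedBall (0 : ℂ) (1 / 2),
      ∀ z' ∈ closedBall (0 : ℂ) (1 / 2), dist z z' < δ → dist (g i z) (g i z') ≤ ε)
    {ε : ℝ} (hε : 0 < ε) :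
    ∃ F : Set ℕ, F.Finite ∧ ∀ i, ∃ j ∈ F, ∀ z ∈ ball (0 : ℂ) (1 / 2), ‖g i z - g j z‖ ≤ ε := by
  obtain ⟨G, hG, hc⟩ := arzela_ascoli_seq hB heq
  obtain ⟨t, ht, htf, hcov⟩ := Metric.finite_approx_of_totallyBounded
    (hc.totallyBounded.subset subset_closure) ε hε
  have ht' : ∀ x ∈ t, ∃ n, G n = x := fun x hx => ht hx
  choose! idx hidx using ht'
  refine ⟨idx '' t, htf.image _, fun i => ?_⟩
  obtain ⟨x, hx, hd⟩ := Set.mem_iUnion₂.1 (hcov ⟨i, rfl⟩)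
  refine ⟨idx x, ⟨x, hx, rfl⟩, fun z hz => ?_⟩
  have h1 := BoundedContinuousFunction.dist_coe_le_dist (f := G i) (g := G (idx x))
    ⟨z, ball_subset_closedBall hz⟩
  rw [hG, hG, dist_eq_norm] at h1
  refine h1.trans ?_
  rw [hidx x hx]
  exact (mem_ball.1 hd).le

lemma exists_uniform_subseq {g : ℕ → ℂ → ℂ} {B : ℝ}
    (hB : ∀ i, ∀ z ∈ closedBall (0 : ℂ) (1 / 2), ‖g i z‖ ≤ B)
    (heq : ∀ ε > 0, ∃ δ > 0, ∀ i, ∀ z ∈ closedBall (0 : ℂ) (1 / 2),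
      ∀ z' ∈ closedBall (0 : ℂ) (1 / 2), dist z z' < δ → dist (g i z) (g i z') ≤ ε) :
    ∃ (τ : ℕ → ℕ) (h : ℂ → ℂ), StrictMono τ ∧
      TendstoUniformlyOn (fun n => g (τ n)) h atTop (ball (0 : ℂ) (1 / 2)) := by
  obtain ⟨G, hG, hc⟩ := arzela_ascoli_seq hB heq
  obtain ⟨H, -, τ, hτ, hlim⟩ := hc.tendsto_subseq (fun n => subset_closure ⟨n, rfl⟩)
  classical
  refine ⟨τ, fun z => if hz : z ∈ closedBall (0 : ℂ) (1 / 2) then H ⟨z, hz⟩ else 0, hτ, ?_⟩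
  rw [Metric.tendstoUniformlyOn_iff]
  intro ε hε
  filter_upwards [(Metric.tendsto_nhds.1 hlim) ε hε] with n hn z hz
  have hz' := ball_subset_closedBall hz
  rw [dif_pos hz', dist_comm, ← hG (τ n) ⟨z, hz'⟩]
  exact (BoundedContinuousFunction.dist_coe_le_dist _).trans_lt hn

lemma lintegral_enorm_triangle {μ : Measure ℂ} {x y z : ℂ → ℂ}
    (hx : AEStronglyMeasurable x μ) (hy : AEStronglyMeasurable y μ) :
    ∫⁻ w, ‖x w - z w‖ₑ ∂μ ≤ ∫⁻ w, ‖x w - y w‖ₑ ∂μ + ∫⁻ w, ‖y w - z w‖ₑ ∂μ := by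
  have hm : AEMeasurable (fun w => ‖x w - y w‖ₑ) μ := (hx.sub hy).enorm
  rw [← lintegral_add_left' hm]
  refine lintegral_mono fun w => ?_
  simp only [← edist_eq_enorm_sub]
  exact edist_triangle _ _ _

/-- A sequence that is totally bounded in `L¹` subconverges in `L¹`. -/
lemma exists_L1_subseq {μ : Measure ℂ} {f : ℕ → ℂ → ℂ} (hf : ∀ i, Integrable (f i) μ)
    (hnet : ∀ ε : ℝ, 0 < ε → ∃ F : Set ℕ, F.Finite ∧
      ∀ i, ∃ j ∈ F, ∫⁻ w, ‖f i w - f j w‖ₑ ∂μ < ENNReal.ofReal ε) :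
    ∃ (σ : ℕ → ℕ) (g : ℂ → ℂ), StrictMono σ ∧ Integrable g μ ∧
      Tendsto (fun n => ∫⁻ w, ‖f (σ n) w - g w‖ₑ ∂μ) atTop (nhds 0) := by
  let U : ℕ → (ℂ →₁[μ] ℂ) := fun i => (hf i).toL1 (f i)
  have htb : TotallyBounded (Set.range U) := by
    rw [Metric.totallyBounded_iff]
    intro ε hε
    obtain ⟨F, hF, h⟩ := hnet ε hε
    refine ⟨U '' F, hF.image _, ?_⟩
    rintro _ ⟨i, rfl⟩
    obtain ⟨j, hj, hij⟩ := h i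
    refine Set.mem_iUnion₂.2 ⟨U j, ⟨j, hj, rfl⟩, ?_⟩
    rw [mem_ball, ← edist_lt_ofReal, Integrable.edist_toL1_toL1]
    simpa only [edist_eq_enorm_sub] using hij
  obtain ⟨g, -, σ, hσ, hlim⟩ :=
    (htb.closure.isCompact_of_isClosed isClosed_closure).tendsto_subseq
      (fun n => subset_closure ⟨n, rfl⟩)
  refine ⟨σ, g, hσ, L1.integrable_coeFn g, ?_⟩
  rw [tendsto_iff_edist_tendsto_0] at hlim
  refine hlim.congr fun n => ?_
  rw [← Integrable.toL1_coeFn g (L1.integrable_coeFn g)]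
  simp only [Function.comp_apply, U]
  rw [Integrable.edist_toL1_toL1]
  simp only [edist_eq_enorm_sub, Integrable.toL1_coeFn]

/-! ### Cauchy transforms on `D_{1/2}` -/

lemma norm_cauchyKer_le {x : ℂ} (hx : 1 / 4 ≤ ‖x‖) : ‖cauchyKer x‖ ≤ 4 := by
  rw [cauchyKer, norm_inv, norm_mul, Complex.norm_real, Real.norm_of_nonneg Real.pi_pos.le]
  refine inv_le_of_inv_le₀ (by norm_num) ?_
  nlinarith [Real.pi_gt_three]

lemma cauchyKer_sub_le {x y : ℂ} (hx : 1 / 4 ≤ ‖x‖) (hy : 1 / 4 ≤ ‖y‖) :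
    ‖cauchyKer x - cauchyKer y‖ ≤ 64 * ‖x - y‖ := by
  have hx0 : x ≠ 0 := by rintro rfl; norm_num at hx
  have hy0 : y ≠ 0 := by rintro rfl; norm_num at hy
  have hpi : (Real.pi : ℂ) ≠ 0 := by exact_mod_cast Real.pi_ne_zero
  have h : cauchyKer x - cauchyKer y = cauchyKer x * cauchyKer y * (Real.pi * (y - x)) := by
    simp only [cauchyKer]; field_simp
  rw [h, norm_mul, norm_mul, norm_mul, Complex.norm_real, Real.norm_of_nonneg Real.pi_pos.le,
    norm_sub_rev y x]
  calc _ ≤ 4 * 4 * (Real.pi * ‖x - y‖) := by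
        gcongr
        · exact norm_cauchyKer_le hx
        · exact norm_cauchyKer_le hy
    _ ≤ 4 * 4 * (4 * ‖x - y‖) := by gcongr; exact Real.pi_le_four
    _ = _ := by ring

lemma annulus_dist {b : ℂ → ℂ} (hb0 : ∀ w ∈ ball (0 : ℂ) (3 / 4), b w = 0) {z w : ℂ}
    (hz : z ∈ closedBall (0 : ℂ) (1 / 2)) (hw : b w ≠ 0) : 1 / 4 ≤ ‖z - w‖ := by
  have h1 : 3 / 4 ≤ ‖w‖ := by
    by_contra h
    exact hw (hb0 w (by rw [mem_ball_zero_iff]; exact not_le.1 h))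
  rw [mem_closedBall_zero_iff] at hz
  have := norm_sub_norm_le w z
  rw [norm_sub_rev] at this
  linarith

lemma conv_congr {f : ℂ → ℂ} (hf : DiscSource f) {z : ℂ}
    (hz : z ∈ closedBall (0 : ℂ) (1 / 2)) :
    (fun w => cauchyKer (z - w) * f w) = fun w => truncKer (z - w) * f w := by
  ext w
  by_cases hw : w ∈ ball (0 : ℂ) 1
  · rw [truncKer_eq hz hw]
  · simp [hf.2 w hw]

lemma conv_cauchyKer_eq {f : ℂ → ℂ} (hf : DiscSource f) {z : ℂ}
    (hz : z ∈ closedBall (0 : ℂ) (1 / 2)) : conv cauchyKer f z = conv truncKer f z := by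
  rw [conv, conv, conv_congr hf hz]

lemma cauchy_integrable {f : ℂ → ℂ} (hf : DiscSource f) {z : ℂ}
    (hz : z ∈ closedBall (0 : ℂ) (1 / 2)) : Integrable (fun w => cauchyKer (z - w) * f w) := by
  rw [conv_congr hf hz]
  exact conv_integrable truncKer_integrable hf z

/-- The Cauchy transform of a source living in the annulus `3/4 ≤ |w| < 1` is holomorphic
on `D_{1/2}`. -/
lemma conv_cauchy_differentiableOn {b : ℂ → ℂ} (hb : DiscSource b)
    (hb0 : ∀ w ∈ ball (0 : ℂ) (3 / 4), b w = 0) :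
    DifferentiableOn ℂ (conv cauchyKer b) (ball (0 : ℂ) (1 / 2)) := by
  intro z hz
  have hd : ∀ x ∈ ball (0 : ℂ) (1 / 2), ∀ w,
      HasDerivAt (fun x => cauchyKer (x - w) * b w)
        (-(Real.pi * cauchyKer (x - w) ^ 2) * b w) x := by
    intro x hx w
    by_cases hw : b w = 0
    · simp only [hw, mul_zero]; exact hasDerivAt_const _ _
    · have h1 := annulus_dist hb0 (ball_subset_closedBall hx) hw
      have hne : x - w ≠ 0 := by intro h; rw [h] at h1; norm_num at h1
      have hpi : (Real.pi : ℂ) ≠ 0 := by exact_mod_cast Real.pi_ne_zero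
      have h2 : HasDerivAt (fun x : ℂ => Real.pi * (x - w)) (Real.pi : ℂ) x := by
        simpa using ((hasDerivAt_id x).sub_const w).const_mul (Real.pi : ℂ)
      refine ((h2.fun_inv (mul_ne_zero hpi hne)).mul_const (b w)).congr_deriv ?_
      simp only [cauchyKer]
      field_simp
  have hmeas : ∀ x, Measurable (fun w => cauchyKer (x - w)) := fun x =>
    cauchyKer_measurable.comp (measurable_const.sub measurable_id)
  have key := hasDerivAt_integral_of_dominated_loc_of_deriv_le (μ := volume) (𝕜 := ℂ)
    (F := fun x w => cauchyKer (x - w) * b w)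
    (F' := fun x w => -(Real.pi * cauchyKer (x - w) ^ 2) * b w)
    (bound := fun w => 64 * ‖b w‖) (isOpen_ball.mem_nhds hz)
    (Eventually.of_forall fun x => ((hmeas x).mul hb.1.measurable).aestronglyMeasurable)
    (cauchy_integrable hb (ball_subset_closedBall hz))
    (((((hmeas z).pow_const 2).const_mul _).neg).mul hb.1.measurable).aestronglyMeasurable
    (ae_of_all _ fun w x hx => ?_) (hb.integrable.norm.const_mul _)
    (ae_of_all _ fun w x hx => hd x hx w)
  · exact key.2.differentiableAt.differentiableWithinAt
  · by_cases hw : b w = 0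
    · simp [hw]
    · have h1 := norm_cauchyKer_le (annulus_dist hb0 (ball_subset_closedBall hx) hw)
      rw [norm_mul, norm_neg, norm_mul, norm_pow, Complex.norm_real,
        Real.norm_of_nonneg Real.pi_pos.le]
      gcongr
      calc Real.pi * ‖cauchyKer (x - w)‖ ^ 2 ≤ 4 * 4 ^ 2 := by
            gcongr; exact Real.pi_le_four
        _ = 64 := by norm_num

lemma conv_equicontinuous {k : ℂ → ℂ} (hk : UniformContinuous k) (hki : Integrable k)
    {f : ℕ → ℂ → ℂ} (hf : ∀ i, DiscSource (f i)) {A : ℝ} (hA0 : 0 < A)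
    (hA : ∀ i, ∫ w, ‖f i w‖ ≤ A) (ε : ℝ) (hε : 0 < ε) :
    ∃ δ > 0, ∀ i z z', dist z z' < δ → dist (conv k (f i) z) (conv k (f i) z') ≤ ε := by
  obtain ⟨δ, hδ, h⟩ := Metric.uniformContinuous_iff.1 hk (ε / A) (div_pos hε hA0)
  refine ⟨δ, hδ, fun i z z' hzz => ?_⟩
  refine (conv_sub_bound (B := ε / A) (hf i).integrable (conv_integrable hki (hf i) z)
    (conv_integrable hki (hf i) z') fun w _ => ?_).trans ?_
  · rw [← dist_eq_norm]
    exact (h (by rwa [dist_sub_right])).le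
  · calc ε / A * ∫ w, ‖f i w‖ ≤ ε / A * A := by gcongr; exact hA i
      _ = ε := by field_simp

/-! ### The two compactness arguments -/

lemma integral_norm_le_of_lintegral {f : ℂ → ℂ} (hf : Continuous f) {A : ℝ} (hA0 : 0 ≤ A)
    (hA : ∫⁻ w, ‖f w‖ₑ ≤ ENNReal.ofReal A) : ∫ w, ‖f w‖ ≤ A := by
  rw [integral_norm_eq_lintegral_enorm hf.aestronglyMeasurable]
  exact ENNReal.toReal_le_of_le_ofReal hA0 hA

lemma conv_sub_kernel {k l f : ℂ → ℂ} (hk : Integrable k) (hl : Integrable l)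
    (hf : DiscSource f) (z : ℂ) :
    conv k f z - conv l f z = conv (fun x => k x - l x) f z := by
  rw [conv, conv, conv, ← integral_sub (conv_integrable hk hf z) (conv_integrable hl hf z)]
  simp only [sub_mul]

/-- If `φ i = k * f i` on `D_{1/2}` with `k ∈ L¹` and `f i` bounded in `L¹`, then `(φ i)` is totally
bounded in `L¹(D_{1/2})`: approximating `k` in `L¹` by a continuous compactly supported kernel
changes `φ i` little in `L¹` and gives a uniformly bounded, equicontinuous family. -/
lemma exists_L1_net {k : ℂ → ℂ} (hkm : Measurable k) (hk : Integrable k) {f φ : ℕ → ℂ → ℂ}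
    (hf : ∀ i, DiscSource (f i)) {A : ℝ} (hA0 : 0 < A)
    (hA : ∀ i, ∫⁻ w, ‖f i w‖ₑ ≤ ENNReal.ofReal A)
    (hφm : ∀ i, AEStronglyMeasurable (φ i) (volume.restrict (ball (0 : ℂ) (1 / 2))))
    (hφ : ∀ i, ∀ z ∈ ball (0 : ℂ) (1 / 2), φ i z = conv k (f i) z) (ε : ℝ) (hε : 0 < ε) :
    ∃ F : Set ℕ, F.Finite ∧ ∀ i, ∃ j ∈ F,
      ∫⁻ w in ball (0 : ℂ) (1 / 2), ‖φ i w - φ j w‖ₑ < ENNReal.ofReal ε := by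
  set μ := volume.restrict (ball (0 : ℂ) (1 / 2)) with hμ
  have hA' : ∀ i, ∫ w, ‖f i w‖ ≤ A := fun i =>
    integral_norm_le_of_lintegral (hf i).1 hA0.le (hA i)
  obtain ⟨l, hlc, hkl, hl, hli⟩ := hk.exists_hasCompactSupport_lintegral_sub_le
    (ε := ENNReal.ofReal (ε / 4 / A)) (by simpa using div_pos (div_pos hε four_pos) hA0)
  have hlu : UniformContinuous l := hlc.uniformContinuous_of_continuous hl
  obtain ⟨B, hB⟩ := hl.bounded_above_of_compact_support hlc
  let g : ℕ → ℂ → ℂ := fun i => conv l (f i)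
  have hequi := conv_equicontinuous hlu hli hf hA0 hA'
  have hgc : ∀ i, Continuous (g i) := by
    intro i
    rw [Metric.continuous_iff]
    intro z η hη
    obtain ⟨δ, hδ, h⟩ := hequi (η / 2) (half_pos hη)
    exact ⟨δ, hδ, fun y hy => (h i y z hy).trans_lt (half_lt_self hη)⟩
  have hB0 : 0 ≤ B := (norm_nonneg _).trans (hB 0)
  have happrox : ∀ i, ∫⁻ w, ‖φ i w - g i w‖ₑ ∂μ ≤ ENNReal.ofReal (ε / 4) := by
    intro i
    calc ∫⁻ w, ‖φ i w - g i w‖ₑ ∂μ = ∫⁻ w, ‖conv (fun x => k x - l x) (f i) w‖ₑ ∂μ := by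
          refine setLIntegral_congr_fun measurableSet_ball fun w hw => ?_
          simp only [g]
          rw [hφ i w hw, conv_sub_kernel hk hli (hf i)]
      _ ≤ ∫⁻ w, ‖conv (fun x => k x - l x) (f i) w‖ₑ := setLIntegral_le_lintegral _ _
      _ ≤ (∫⁻ z, ‖k z - l z‖ₑ) * ∫⁻ w, ‖f i w‖ₑ :=
          lintegral_conv_le (hkm.sub hl.measurable) (hf i).1.measurable
      _ ≤ ENNReal.ofReal (ε / 4 / A) * ENNReal.ofReal A := by gcongr; exact hA i
      _ = ENNReal.ofReal (ε / 4) := by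
          rw [← ENNReal.ofReal_mul (by positivity)]
          congr 1
          field_simp
  -- uniform `η`-closeness on `D_{1/2}` costs at most `η * V` in `L¹`
  set V : ℝ := volume.real (ball (0 : ℂ) (1 / 2)) with hV
  have hV0 : 0 ≤ V := measureReal_nonneg
  obtain ⟨F, hF, hnet⟩ := exists_finite_net (g := g) (B := B * A)
    (fun i z _ => (norm_integral_mul_le (hf i).integrable fun w _ => hB _).trans
      (by gcongr; exact hA' i))
    (fun η hη => by
      obtain ⟨δ, hδ, h⟩ := hequi η hη
      exact ⟨δ, hδ, fun i z _ z' _ => h i z z'⟩)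
    (ε := ε / 4 / (V + 1)) (by positivity)
  refine ⟨F, hF, fun i => ?_⟩
  obtain ⟨j, hj, hij⟩ := hnet i
  refine ⟨j, hj, ?_⟩
  have hmid : ∫⁻ w, ‖g i w - g j w‖ₑ ∂μ ≤ ENNReal.ofReal (ε / 4) := by
    calc ∫⁻ w, ‖g i w - g j w‖ₑ ∂μ
        ≤ ∫⁻ _ in ball (0 : ℂ) (1 / 2), ENNReal.ofReal (ε / 4 / (V + 1)) := by
          refine setLIntegral_mono measurable_const fun w hw => ?_
          rw [← ofReal_norm]
          exact ENNReal.ofReal_le_ofReal (hij w hw)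
      _ = ENNReal.ofReal (ε / 4 / (V + 1)) * ENNReal.ofReal V := by
          rw [setLIntegral_const, hV, ofReal_measureReal measure_ball_lt_top.ne]
      _ ≤ ENNReal.ofReal (ε / 4) := by
          rw [← ENNReal.ofReal_mul (by positivity)]
          refine ENNReal.ofReal_le_ofReal ?_
          rw [div_mul_eq_mul_div, div_le_iff₀ (by positivity)]
          nlinarith
  calc ∫⁻ w, ‖φ i w - φ j w‖ₑ ∂μ
      ≤ ∫⁻ w, ‖φ i w - g i w‖ₑ ∂μ + ∫⁻ w, ‖g i w - φ j w‖ₑ ∂μ :=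
        lintegral_enorm_triangle (hφm i) (hgc i).aestronglyMeasurable
    _ ≤ ∫⁻ w, ‖φ i w - g i w‖ₑ ∂μ +
          (∫⁻ w, ‖g i w - g j w‖ₑ ∂μ + ∫⁻ w, ‖g j w - φ j w‖ₑ ∂μ) := by
        gcongr
        exact lintegral_enorm_triangle (hgc i).aestronglyMeasurable (hgc j).aestronglyMeasurable
    _ ≤ ENNReal.ofReal (ε / 4) + (ENNReal.ofReal (ε / 4) + ENNReal.ofReal (ε / 4)) := by
        gcongr
        · exact happrox i
        · simpa only [enorm_sub_rev] using happrox j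
    _ = ENNReal.ofReal (3 * (ε / 4)) := by
        rw [← ENNReal.ofReal_add (by positivity) (by positivity),
          ← ENNReal.ofReal_add (by positivity) (by positivity)]
        congr 1
        ring
    _ < ENNReal.ofReal ε := (ENNReal.ofReal_lt_ofReal_iff hε).2 (by linarith)

/-- Cauchy transforms of `L¹`-bounded sources in the annulus form a normal family on `D_{1/2}`. -/
lemma exists_holomorphic_subseq {b : ℕ → ℂ → ℂ} (hb : ∀ i, DiscSource (b i))
    (hb0 : ∀ i, ∀ w ∈ ball (0 : ℂ) (3 / 4), b i w = 0) {A : ℝ} (hA0 : 0 < A)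
    (hA : ∀ i, ∫⁻ w, ‖b i w‖ₑ ≤ ENNReal.ofReal A) :
    ∃ (τ : ℕ → ℕ) (h : ℂ → ℂ), StrictMono τ ∧ DifferentiableOn ℂ h (ball (0 : ℂ) (1 / 2)) ∧
      TendstoUniformlyOn (fun n => conv cauchyKer (b (τ n))) h atTop (ball (0 : ℂ) (1 / 2)) := by
  have hA' : ∀ i, ∫ w, ‖b i w‖ ≤ A := fun i =>
    integral_norm_le_of_lintegral (hb i).1 hA0.le (hA i)
  obtain ⟨τ, h, hτ, hlim⟩ := exists_uniform_subseq (g := fun i => conv cauchyKer (b i))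
    (B := 4 * A)
    (fun i z hz => (norm_integral_mul_le (hb i).integrable
      fun w hw => norm_cauchyKer_le (annulus_dist (hb0 i) hz hw)).trans (by gcongr; exact hA' i))
    (fun ε hε => by
      refine ⟨ε / (64 * A), by positivity, fun i z hz z' hz' hzz => ?_⟩
      refine (conv_sub_bound (B := 64 * dist z z') (hb i).integrable
        (cauchy_integrable (hb i) hz) (cauchy_integrable (hb i) hz') fun w hw => ?_).trans ?_
      · refine (cauchyKer_sub_le (annulus_dist (hb0 i) hz hw)
          (annulus_dist (hb0 i) hz' hw)).trans ?_
        rw [sub_sub_sub_cancel_right, dist_eq_norm]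
      · rw [lt_div_iff₀ (by positivity)] at hzz
        calc 64 * dist z z' * ∫ w, ‖b i w‖ ≤ 64 * dist z z' * A := by gcongr; exact hA' i
          _ ≤ ε := by linarith)
  refine ⟨τ, h, hτ, ?_, hlim⟩
  exact hlim.tendstoLocallyUniformlyOn.differentiableOn
    (Eventually.of_forall fun n => conv_cauchy_differentiableOn (hb _) (hb0 _)) isOpen_ball

lemma lintegral_tendsto_zero_of_uniform {g : ℕ → ℂ → ℂ} {h : ℂ → ℂ}
    (hlim : TendstoUniformlyOn g h atTop (ball (0 : ℂ) (1 / 2))) :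
    Tendsto (fun n => ∫⁻ w in ball (0 : ℂ) (1 / 2), ‖g n w - h w‖ₑ) atTop (nhds 0) := by
  have hvol : volume (ball (0 : ℂ) (1 / 2)) ≠ ⊤ := measure_ball_lt_top.ne
  set V : ℝ := volume.real (ball (0 : ℂ) (1 / 2)) with hV
  have hV0 : 0 ≤ V := measureReal_nonneg
  rw [ENNReal.tendsto_nhds_zero]
  intro ε hε
  rcases eq_or_ne ε ⊤ with rfl | hεtop
  · simp
  have hεr : 0 < ε.toReal := ENNReal.toReal_pos hε.ne' hεtop
  filter_upwards [Metric.tendstoUniformlyOn_iff.1 hlim (ε.toReal / (V + 1)) (by positivity)]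
    with n hn
  calc ∫⁻ w in ball (0 : ℂ) (1 / 2), ‖g n w - h w‖ₑ
      ≤ ∫⁻ _ in ball (0 : ℂ) (1 / 2), ENNReal.ofReal (ε.toReal / (V + 1)) := by
        refine setLIntegral_mono measurable_const fun w hw => ?_
        rw [← ofReal_norm, ← dist_eq_norm, dist_comm]
        exact ENNReal.ofReal_le_ofReal (hn w hw).le
    _ = ENNReal.ofReal (ε.toReal / (V + 1)) * ENNReal.ofReal V := by
        rw [setLIntegral_const, hV, ofReal_measureReal hvol]
    _ ≤ ENNReal.ofReal ε.toReal := by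
        rw [← ENNReal.ofReal_mul (by positivity)]
        refine ENNReal.ofReal_le_ofReal ?_
        rw [div_mul_eq_mul_div, div_le_iff₀ (by positivity)]
        nlinarith
    _ = ε := ENNReal.ofReal_toReal hεtop

/-- A sequence of `C¹` functions on the unit disc with uniformly bounded
`L¹` norms of the functions and of their antiholomorphic derivatives subconverges in
`L¹(D_{1/2})`; moreover, if the antiholomorphic derivatives tend to `0` in `L¹(D)`, the limit
agrees a.e. on `D_{1/2}` with a holomorphic function. -/
theorem stmt_0 (ψ : ℕ → ℂ → ℂ) (C : ℝ)
    (hreg : ∀ i, ContDiffOn ℝ 1 (ψ i) (ball (0 : ℂ) 1))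
    (hbd : ∀ i, (∫⁻ z in ball (0 : ℂ) 1, ‖ψ i z‖₊) + (∫⁻ z in ball (0 : ℂ) 1, ‖dbar (ψ i) z‖₊)
      ≤ ENNReal.ofReal C) :
    ∃ (σ : ℕ → ℕ) (ψ_inf : ℂ → ℂ), StrictMono σ ∧
      IntegrableOn ψ_inf (ball (0 : ℂ) (1 / 2)) ∧
      Tendsto (fun i => ∫⁻ z in ball (0 : ℂ) (1 / 2), ‖ψ (σ i) z - ψ_inf z‖₊) atTop (nhds 0) ∧
      (Tendsto (fun i => ∫⁻ z in ball (0 : ℂ) 1, ‖dbar (ψ i) z‖₊) atTop (nhds 0) →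
        ∃ h : ℂ → ℂ, DifferentiableOn ℂ h (ball (0 : ℂ) (1 / 2)) ∧
          ∀ᵐ z ∂(volume.restrict (ball (0 : ℂ) (1 / 2))), ψ_inf z = h z) := by
  obtain ⟨M, hM⟩ := exists_decomposition
  choose a b ha hb hb0 hrep haL hbL using fun i => hM (ψ i) (hreg i)
  have hψC : ∀ i, ∫⁻ z in ball (0 : ℂ) 1, ‖ψ i z‖ₑ ≤ ENNReal.ofReal C :=
    fun i => le_self_add.trans (hbd i)
  have hdC : ∀ i, ∫⁻ z in ball (0 : ℂ) 1, ‖dbar (ψ i) z‖ₑ ≤ ENNReal.ofReal C :=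
    fun i => le_add_self.trans (hbd i)
  set A : ℝ := |C| + M * |C| + 1 with hAdef
  have hA0 : 0 < A := by positivity
  have hCC : ENNReal.ofReal C ≤ ENNReal.ofReal |C| := ENNReal.ofReal_le_ofReal (le_abs_self C)
  have hMC : (M : ENNReal) * ENNReal.ofReal |C| = ENNReal.ofReal (M * |C|) := by
    rw [ENNReal.ofReal_mul M.coe_nonneg, ENNReal.ofReal_coe_nnreal]
  have hbM : ∀ i, ∫⁻ w, ‖b i w‖ₑ ≤ ENNReal.ofReal (M * |C|) := by
    intro i
    rw [← hMC]
    refine (hbL i).trans ?_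
    gcongr
    exact (hψC i).trans hCC
  have hbA : ∀ i, ∫⁻ w, ‖b i w‖ₑ ≤ ENNReal.ofReal A := fun i =>
    (hbM i).trans (ENNReal.ofReal_le_ofReal (by rw [hAdef]; linarith [abs_nonneg C]))
  have hf : ∀ i, DiscSource (fun w => a i w + b i w) := fun i => (ha i).add (hb i)
  have hfA : ∀ i, ∫⁻ w, ‖a i w + b i w‖ₑ ≤ ENNReal.ofReal A := by
    intro i
    calc ∫⁻ w, ‖a i w + b i w‖ₑ ≤ ∫⁻ w, (‖a i w‖ₑ + ‖b i w‖ₑ) :=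
          lintegral_mono fun w => enorm_add_le _ _
      _ = (∫⁻ w, ‖a i w‖ₑ) + ∫⁻ w, ‖b i w‖ₑ := lintegral_add_left (ha i).1.enorm.measurable _
      _ ≤ ENNReal.ofReal |C| + ENNReal.ofReal (M * |C|) :=
          add_le_add ((haL i).trans ((hdC i).trans hCC)) (hbM i)
      _ = ENNReal.ofReal (|C| + M * |C|) :=
          (ENNReal.ofReal_add (by positivity) (by positivity)).symm
      _ ≤ ENNReal.ofReal A := ENNReal.ofReal_le_ofReal (by linarith)
  have hsub : ball (0 : ℂ) (1 / 2) ⊆ ball 0 1 := ball_subset_ball (by norm_num)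
  have hψm : ∀ i, AEStronglyMeasurable (ψ i) (volume.restrict (ball (0 : ℂ) (1 / 2))) := fun i =>
    ((hreg i).continuousOn.mono hsub).aestronglyMeasurable measurableSet_ball
  have hψi : ∀ i, Integrable (ψ i) (volume.restrict (ball (0 : ℂ) (1 / 2))) := fun i =>
    ⟨hψm i, ((lintegral_mono_set hsub).trans (hψC i)).trans_lt ENNReal.ofReal_lt_top⟩
  have hψconv : ∀ i, ∀ z ∈ ball (0 : ℂ) (1 / 2),
      ψ i z = conv truncKer (fun w => a i w + b i w) z := by
    intro i z hz
    rw [← conv_cauchyKer_eq (hf i) (ball_subset_closedBall hz), hrep i z hz, conv]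
  obtain ⟨σ, g, hσ, hg, hlim⟩ := exists_L1_subseq hψi
    (exists_L1_net truncKer_measurable truncKer_integrable hf hA0 hfA hψm hψconv)
  refine ⟨σ, g, hσ, hg, hlim, fun hT => ?_⟩
  obtain ⟨τ, h, hτ, hh, hunif⟩ := exists_holomorphic_subseq (b := fun i => b (σ i))
    (fun i => hb _) (fun i => hb0 _) hA0 (fun i => hbA _)
  refine ⟨h, hh, ?_⟩
  set μ := volume.restrict (ball (0 : ℂ) (1 / 2)) with hμ
  -- on `D_{1/2}` the difference `ψ i - K * b i` is `K * a i`, and `‖a i‖₁ → 0`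
  have hdiff : Tendsto (fun i => ∫⁻ w, ‖ψ i w - conv cauchyKer (b i) w‖ₑ ∂μ) atTop (nhds 0) := by
    have hbound : ∀ i, ∫⁻ w, ‖ψ i w - conv cauchyKer (b i) w‖ₑ ∂μ
        ≤ (∫⁻ z, ‖truncKer z‖ₑ) * ∫⁻ z in ball (0 : ℂ) 1, ‖dbar (ψ i) z‖ₑ := by
      intro i
      calc ∫⁻ w, ‖ψ i w - conv cauchyKer (b i) w‖ₑ ∂μ = ∫⁻ w, ‖conv truncKer (a i) w‖ₑ ∂μ := by
            refine setLIntegral_congr_fun measurableSet_ball fun w hw => ?_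
            rw [conv_cauchyKer_eq (hb i) (ball_subset_closedBall hw), hψconv i w hw]
            simp only [conv, mul_add]
            rw [integral_add (conv_integrable truncKer_integrable (ha i) w)
              (conv_integrable truncKer_integrable (hb i) w), add_sub_cancel_right]
        _ ≤ ∫⁻ w, ‖conv truncKer (a i) w‖ₑ := setLIntegral_le_lintegral _ _
        _ ≤ (∫⁻ z, ‖truncKer z‖ₑ) * ∫⁻ w, ‖a i w‖ₑ :=
            lintegral_conv_le truncKer_measurable (ha i).1.measurable
        _ ≤ _ := mul_le_mul_right (haL i) _
    have hT' := ENNReal.Tendsto.const_mul (a := ∫⁻ z, ‖truncKer z‖ₑ) hT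
      (Or.inr truncKer_integrable.2.ne)
    rw [mul_zero] at hT'
    exact tendsto_of_tendsto_of_tendsto_of_le_of_le tendsto_const_nhds hT'
      (fun _ => zero_le) hbound
  have hsum : Tendsto (fun n => ∫⁻ w, ‖ψ (σ (τ n)) w - g w‖ₑ ∂μ +
      (∫⁻ w, ‖ψ (σ (τ n)) w - conv cauchyKer (b (σ (τ n))) w‖ₑ ∂μ +
        ∫⁻ w, ‖conv cauchyKer (b (σ (τ n))) w - h w‖ₑ ∂μ)) atTop (nhds (0 + (0 + 0))) :=
    (hlim.comp hτ.tendsto_atTop).add ((hdiff.comp (hσ.comp hτ).tendsto_atTop).add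
      (lintegral_tendsto_zero_of_uniform hunif))
  have hle : ∀ n, ∫⁻ w, ‖g w - h w‖ₑ ∂μ ≤ ∫⁻ w, ‖ψ (σ (τ n)) w - g w‖ₑ ∂μ +
      (∫⁻ w, ‖ψ (σ (τ n)) w - conv cauchyKer (b (σ (τ n))) w‖ₑ ∂μ +
        ∫⁻ w, ‖conv cauchyKer (b (σ (τ n))) w - h w‖ₑ ∂μ) := by
    intro n
    refine (lintegral_enorm_triangle hg.1 (hψm (σ (τ n)))).trans ?_
    refine add_le_add (by simp only [enorm_sub_rev, le_refl]) ?_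
    exact lintegral_enorm_triangle (hψm _)
      ((conv_cauchy_differentiableOn (hb _) (hb0 _)).continuousOn.aestronglyMeasurable
        measurableSet_ball)
  have hzero : ∫⁻ w, ‖g w - h w‖ₑ ∂μ = 0 := by
    simp only [add_zero] at hsum
    exact le_antisymm (ge_of_tendsto' hsum hle) zero_le
  have hhm : AEStronglyMeasurable h μ := hh.continuousOn.aestronglyMeasurable measurableSet_ball
  have hm : AEMeasurable (fun w => ‖g w - h w‖ₑ) μ := (hg.1.sub hhm).enorm
  filter_upwards [(lintegral_eq_zero_iff' hm).1 hzero] with w hw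
  simpa [sub_eq_zero] using hw
end

section
/- Let ψ : D → ℂ be C¹ on the open unit disc and let 0 < r < 1. Then the deviation of ψ(0) from its average over the circle of radius r is controlled by the antiholomorphic derivative: |ψ(0) − (1/2π) ∫₀^{2π} ψ(r e^{iθ}) dθ| ≤ (1/π) ∫_{D_r} |(∂_z̄ψ)(z)| / |z| dA(z). -/
/-!
The proof runs in polar coordinates `z = s e^{iθ}` on `(0, r) × (-π, π)`. Along each ray, the
fundamental theorem of calculus gives `ψ(r e^{iθ}) - ψ(0) = ∫₀^r Dψ(s e^{iθ})(e^{iθ}) ds`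
(`integral_fderiv_radial`). On each circle the angular derivative `Dψ(s e^{iθ})(i e^{iθ})`
integrates to zero, being `1 / s` times the `θ`-derivative of a periodic function
(`integral_fderiv_angular`). Adding `i` times the latter to the former turns the integrand into
`2 e^{-iθ} ∂_z̄ψ` (`fderiv_add_I_mul_fderiv`), so that by Fubini
`∫ ψ(r e^{iθ}) dθ - 2π ψ(0) = ∫∫ 2 e^{-iθ} ∂_z̄ψ(s e^{iθ}) ds dθ`.
The estimate follows by taking norms, since `ds dθ = dA / |z|` (`integral_ball_div_norm`).
-/

open MeasureTheory Metric

open Set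

/-- The polar form of `∂_z̄`: `Dψ(e) + i Dψ(i e) = 2 ē ∂_z̄ψ` with `e = e^{iθ}`. -/
lemma fderiv_add_I_mul_fderiv (ψ : ℂ → ℂ) (z : ℂ) (θ : ℝ) :
    fderiv ℝ ψ z (Complex.exp (θ * Complex.I))
      + Complex.I * fderiv ℝ ψ z (Complex.I * Complex.exp (θ * Complex.I))
      = 2 * Complex.exp (-(θ * Complex.I)) * dbar ψ z := by
  have h1 : Complex.exp (θ * Complex.I)
      = (Real.cos θ) • (1 : ℂ) + (Real.sin θ) • Complex.I := by
    rw [Complex.exp_mul_I]; simp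
  have h2 : Complex.I * Complex.exp (θ * Complex.I)
      = (Real.cos θ) • Complex.I + (-Real.sin θ) • (1 : ℂ) := by
    rw [h1]
    simp only [Complex.real_smul, Complex.ofReal_neg]
    linear_combination (Real.sin θ : ℂ) * Complex.I_mul_I
  have h3 : Complex.exp (-(θ * Complex.I)) = (Real.cos θ : ℂ) - (Real.sin θ : ℂ) * Complex.I := by
    rw [← neg_mul, ← Complex.ofReal_neg, Complex.exp_mul_I]; simp [sub_eq_add_neg]
  rw [h2, h1, h3, dbar, map_add, map_add, map_smul, map_smul, map_smul, map_smul]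
  simp only [Complex.real_smul, Complex.ofReal_neg]
  linear_combination (Real.sin θ : ℂ) * fderiv ℝ ψ z Complex.I * Complex.I_mul_I

lemma norm_real_mul_exp (s θ : ℝ) : ‖(s : ℂ) * Complex.exp (θ * Complex.I)‖ = |s| := by
  rw [norm_mul, Complex.norm_exp_ofReal_mul_I]; simp

lemma mul_exp_mem_ball {r : ℝ} (hr1 : r < 1) {s : ℝ} (hs : s ∈ Icc 0 r) (θ : ℝ) :
    (s : ℂ) * Complex.exp (θ * Complex.I) ∈ ball (0 : ℂ) 1 := by
  rw [mem_ball_zero_iff, norm_real_mul_exp, abs_of_nonneg hs.1]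
  exact hs.2.trans_lt hr1

lemma continuousOn_fderiv_polar {ψ : ℂ → ℂ} (hψ : ContDiffOn ℝ 1 ψ (ball (0 : ℂ) 1))
    {r : ℝ} (hr1 : r < 1) :
    ContinuousOn (fun p : ℝ × ℝ => fderiv ℝ ψ ((p.1 : ℂ) * Complex.exp (p.2 * Complex.I)))
      (Icc 0 r ×ˢ univ) := by
  refine (hψ.continuousOn_fderiv_of_isOpen isOpen_ball le_rfl).comp
    (by fun_prop) ?_
  rintro ⟨s, θ⟩ ⟨hs, -⟩
  exact mul_exp_mem_ball hr1 hs θ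

/-- A function continuous for `(s, θ) ∈ [0, r] × ℝ` is integrable on `(0, r) × (-π, π)`. -/
lemma integrable_polar {f : ℝ × ℝ → ℂ} {r : ℝ} (hf : ContinuousOn f (Icc 0 r ×ˢ univ)) :
    Integrable f ((volume.restrict (Ioo 0 r)).prod
      (volume.restrict (Ioo (-Real.pi) Real.pi))) := by
  rw [Measure.prod_restrict]
  have h : IntegrableOn f (Icc 0 r ×ˢ Icc (-Real.pi) Real.pi) (volume.prod volume) :=
    (hf.mono (prod_mono_right (subset_univ _))).integrableOn_compact
      (isCompact_Icc.prod isCompact_Icc)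
  exact h.mono_set (prod_mono Ioo_subset_Icc_self Ioo_subset_Icc_self)

/-- The angular derivative of `ψ` integrates to zero over a circle. -/
lemma integral_fderiv_angular {ψ : ℂ → ℂ} (hψ : ContDiffOn ℝ 1 ψ (ball (0 : ℂ) 1))
    {r : ℝ} (hr1 : r < 1) {s : ℝ} (hs : s ∈ Ioo 0 r) :
    ∫ θ in Ioo (-Real.pi) Real.pi, fderiv ℝ ψ ((s : ℂ) * Complex.exp (θ * Complex.I))
      (Complex.I * Complex.exp (θ * Complex.I)) = 0 := by
  have hs' : s ∈ Icc 0 r := Ioo_subset_Icc_self hs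
  have hcont : Continuous (fun θ : ℝ => fderiv ℝ ψ ((s : ℂ) * Complex.exp (θ * Complex.I))) := by
    rw [← continuousOn_univ]
    exact (continuousOn_fderiv_polar hψ hr1).comp (f := fun θ : ℝ => (s, θ)) (by fun_prop)
      (fun θ _ => ⟨hs', mem_univ _⟩)
  have hder : ∀ θ : ℝ, HasDerivAt (fun θ : ℝ => ψ ((s : ℂ) * Complex.exp (θ * Complex.I)))
      (s • fderiv ℝ ψ ((s : ℂ) * Complex.exp (θ * Complex.I))
        (Complex.I * Complex.exp (θ * Complex.I))) θ := by
    intro θ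
    have h1 : HasDerivAt (fun θ : ℝ => (s : ℂ) * Complex.exp (θ * Complex.I))
        (s • (Complex.I * Complex.exp (θ * Complex.I))) θ := by
      have h := (((hasDerivAt_id θ).ofReal_comp.mul_const Complex.I).cexp).const_mul (s : ℂ)
      refine h.congr_deriv ?_
      simp [mul_comm]
    have h2 := ((hψ.differentiableOn one_ne_zero).differentiableAt
      (isOpen_ball.mem_nhds (mul_exp_mem_ball hr1 hs' θ))).hasFDerivAt
    have h3 := h2.comp_hasDerivAt θ h1
    rwa [map_smul] at h3
  have hint := intervalIntegral.integral_eq_sub_of_hasDerivAt (a := -Real.pi) (b := Real.pi)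
    (fun θ _ => hder θ)
    (Continuous.intervalIntegrable (by fun_prop) _ _)
  have hper : Complex.exp ((Real.pi : ℂ) * Complex.I)
      = Complex.exp (((-Real.pi : ℝ) : ℂ) * Complex.I) := by
    simp [Complex.exp_neg]
  rw [hper, sub_self, intervalIntegral.integral_smul, smul_eq_zero] at hint
  rw [← integral_Ioc_eq_integral_Ioo, ← intervalIntegral.integral_of_le (by linarith [Real.pi_pos])]
  exact hint.resolve_left hs.1.ne'

lemma integral_fderiv_radial {ψ : ℂ → ℂ} (hψ : ContDiffOn ℝ 1 ψ (ball (0 : ℂ) 1))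
    {r : ℝ} (hr : 0 < r) (hr1 : r < 1) (θ : ℝ) :
    ∫ s in Ioo 0 r, fderiv ℝ ψ ((s : ℂ) * Complex.exp (θ * Complex.I))
      (Complex.exp (θ * Complex.I)) = ψ ((r : ℂ) * Complex.exp (θ * Complex.I)) - ψ 0 := by
  have hcont : ContinuousOn (fun s : ℝ => fderiv ℝ ψ ((s : ℂ) * Complex.exp (θ * Complex.I)))
      (Icc 0 r) :=
    (continuousOn_fderiv_polar hψ hr1).comp (f := fun s : ℝ => (s, θ)) (by fun_prop)
      (fun s hs => ⟨hs, mem_univ _⟩)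
  have hder : ∀ s ∈ uIcc 0 r, HasDerivAt (fun s : ℝ => ψ ((s : ℂ) * Complex.exp (θ * Complex.I)))
      (fderiv ℝ ψ ((s : ℂ) * Complex.exp (θ * Complex.I)) (Complex.exp (θ * Complex.I))) s := by
    intro s hs
    rw [uIcc_of_le hr.le] at hs
    have h1 : HasDerivAt (fun s : ℝ => (s : ℂ) * Complex.exp (θ * Complex.I))
        (Complex.exp (θ * Complex.I)) s := by
      simpa using (Complex.ofRealCLM.hasDerivAt (x := s)).mul_const (Complex.exp (θ * Complex.I))
    exact ((hψ.differentiableOn one_ne_zero).differentiableAt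
      (isOpen_ball.mem_nhds (mul_exp_mem_ball hr1 hs θ))).hasFDerivAt.comp_hasDerivAt s h1
  have hint := intervalIntegral.integral_eq_sub_of_hasDerivAt hder
    (ContinuousOn.intervalIntegrable (by rw [uIcc_of_le hr.le]; fun_prop))
  rw [← integral_Ioc_eq_integral_Ioo, ← intervalIntegral.integral_of_le hr.le, hint]
  simp

/-- In polar coordinates the weight `1 / |z|` cancels the Jacobian. -/
lemma integral_ball_div_norm (g : ℂ → ℝ) (r : ℝ) :
    ∫ z in ball (0 : ℂ) r, g z / ‖z‖
      = ∫ p, g ((p.1 : ℂ) * Complex.exp (p.2 * Complex.I))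
        ∂((volume.restrict (Ioo 0 r)).prod (volume.restrict (Ioo (-Real.pi) Real.pi))) := by
  rw [← integral_indicator measurableSet_ball, ← Complex.integral_comp_polarCoord_symm,
    Measure.prod_restrict, polarCoord_target, ← Measure.volume_eq_prod,
    ← integral_indicator (measurableSet_Ioi.prod measurableSet_Ioo),
    ← integral_indicator (measurableSet_Ioo.prod measurableSet_Ioo)]
  congr 1
  ext ⟨s, θ⟩
  classical
  have hp : Complex.polarCoord.symm (s, θ) = (s : ℂ) * Complex.exp (θ * Complex.I) := by
    rw [Complex.polarCoord_symm_apply, Complex.exp_mul_I]; simp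
  simp only [indicator_apply, mem_prod, mem_Ioi, mem_Ioo, hp, mem_ball_zero_iff,
    norm_real_mul_exp, smul_eq_mul]
  by_cases hs : 0 < s
  · rw [abs_of_pos hs]
    by_cases h2 : s < r <;> simp [hs, h2, mul_div_cancel₀, hs.ne']
  · simp [hs]

/-- For `ψ` which is `C¹` on the open unit disc and `0 < r < 1`, the deviation
of `ψ(0)` from its average over the circle of radius `r` is controlled by the antiholomorphic
derivative:
`|ψ(0) − (1/2π) ∫₀^{2π} ψ(r e^{iθ}) dθ| ≤ (1/π) ∫_{D_r} |(∂_z̄ψ)(z)|/|z| dA(z)`. -/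
theorem stmt_2 (ψ : ℂ → ℂ) (hψ : ContDiffOn ℝ 1 ψ (ball (0 : ℂ) 1))
    (r : ℝ) (hr : 0 < r) (hr1 : r < 1) :
    ‖ψ 0 - (1 / (2 * Real.pi)) •
        (∫ θ in (0 : ℝ)..(2 * Real.pi), ψ ((r : ℂ) * Complex.exp (θ * Complex.I)))‖
      ≤ (1 / Real.pi) * ∫ z in ball (0 : ℂ) r, ‖dbar ψ z‖ / ‖z‖ := by
  have hpi := Real.pi_pos
  have hF := continuousOn_fderiv_polar hψ hr1
  have hrad := integrable_polar (f := fun p => fderiv ℝ ψ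
    ((p.1 : ℂ) * Complex.exp (p.2 * Complex.I)) (Complex.exp (p.2 * Complex.I)))
    (hF.clm_apply (by fun_prop))
  have hang := integrable_polar (f := fun p => fderiv ℝ ψ
    ((p.1 : ℂ) * Complex.exp (p.2 * Complex.I)) (Complex.I * Complex.exp (p.2 * Complex.I)))
    (hF.clm_apply (by fun_prop))
  have hper : Function.Periodic
      (fun θ : ℝ => ψ ((r : ℂ) * Complex.exp (θ * Complex.I))) (2 * Real.pi) := by
    intro θ
    have : ((θ + 2 * Real.pi : ℝ) : ℂ) * Complex.I
        = θ * Complex.I + 2 * Real.pi * Complex.I := by push_cast; ring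
    simp only [this, Complex.exp_periodic _]
  have hcirc : Continuous (fun θ : ℝ => ψ ((r : ℂ) * Complex.exp (θ * Complex.I))) :=
    hψ.continuousOn.comp_continuous (by fun_prop)
      (fun θ => mul_exp_mem_ball hr1 (right_mem_Icc.2 hr.le) θ)
  have hshift := hper.intervalIntegral_add_eq 0 (-Real.pi)
  rw [zero_add, show -Real.pi + 2 * Real.pi = Real.pi by ring] at hshift
  have hradint : ∫ p, fderiv ℝ ψ ((p.1 : ℂ) * Complex.exp (p.2 * Complex.I))
        (Complex.exp (p.2 * Complex.I))
        ∂((volume.restrict (Ioo 0 r)).prod (volume.restrict (Ioo (-Real.pi) Real.pi)))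
      = (∫ θ in (0 : ℝ)..(2 * Real.pi), ψ ((r : ℂ) * Complex.exp (θ * Complex.I)))
        - (2 * Real.pi) • ψ 0 := by
    rw [integral_prod_symm _ hrad]
    simp only [integral_fderiv_radial hψ hr hr1]
    rw [hshift, ← integral_Ioc_eq_integral_Ioo, ← intervalIntegral.integral_of_le (by linarith),
      intervalIntegral.integral_sub (hcirc.intervalIntegrable _ _) (by simp),
      intervalIntegral.integral_const, show Real.pi - -Real.pi = 2 * Real.pi by ring]
  have hangint : ∫ p, fderiv ℝ ψ ((p.1 : ℂ) * Complex.exp (p.2 * Complex.I))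
        (Complex.I * Complex.exp (p.2 * Complex.I))
        ∂((volume.restrict (Ioo 0 r)).prod (volume.restrict (Ioo (-Real.pi) Real.pi))) = 0 := by
    rw [integral_prod _ hang,
      setIntegral_congr_fun measurableSet_Ioo (fun s hs => integral_fderiv_angular hψ hr1 hs)]
    simp
  have hsum : (∫ θ in (0 : ℝ)..(2 * Real.pi), ψ ((r : ℂ) * Complex.exp (θ * Complex.I)))
        - (2 * Real.pi) • ψ 0
      = ∫ p, 2 * Complex.exp (-((p.2 : ℂ) * Complex.I))
          * dbar ψ ((p.1 : ℂ) * Complex.exp (p.2 * Complex.I))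
        ∂((volume.restrict (Ioo 0 r)).prod (volume.restrict (Ioo (-Real.pi) Real.pi))) := by
    simp only [← fderiv_add_I_mul_fderiv]
    rw [integral_add hrad (hang.const_mul _), integral_const_mul, hangint, hradint]
    simp
  have hbound : ‖(∫ θ in (0 : ℝ)..(2 * Real.pi), ψ ((r : ℂ) * Complex.exp (θ * Complex.I)))
        - (2 * Real.pi) • ψ 0‖ ≤ 2 * ∫ z in ball (0 : ℂ) r, ‖dbar ψ z‖ / ‖z‖ := by
    rw [hsum, integral_ball_div_norm, ← integral_const_mul]
    refine (norm_integral_le_integral_norm _).trans_eq (integral_congr_ae (ae_of_all _ ?_))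
    intro p
    have : ‖Complex.exp (-((p.2 : ℂ) * Complex.I))‖ = 1 := by
      rw [← neg_mul, ← Complex.ofReal_neg, Complex.norm_exp_ofReal_mul_I]
    simp [this]
  set A := ∫ θ in (0 : ℝ)..(2 * Real.pi), ψ ((r : ℂ) * Complex.exp (θ * Complex.I))
  have hrew : ψ 0 - (1 / (2 * Real.pi)) • A
      = -((1 / (2 * Real.pi)) • (A - (2 * Real.pi) • ψ 0)) := by
    rw [smul_sub, smul_smul, one_div_mul_cancel (by positivity), one_smul, neg_sub]
  rw [hrew, norm_neg, norm_smul, Real.norm_of_nonneg (by positivity)]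
  calc _ ≤ (1 / (2 * Real.pi)) * (2 * ∫ z in ball (0 : ℂ) r, ‖dbar ψ z‖ / ‖z‖) := by gcongr
    _ = _ := by field_simp
end

section
/- There exists a universal constant C < ∞ such that the following holds. Let φ be a mollifying kernel, let ψ : D → ℂ be C¹ on the open unit disc, let w ∈ D_{1/2} and let ε ∈ (0, 1/2]. Then |ψ(w) − ψ^ε(w)| ≤ C ∫_{D_ε(w)} |(∂_z̄ψ)(z)| / |z − w| dA(z), where D_ε(w) denotes the open disc of radius ε centred at w. -/
/-! The proof takes `C = 1 / π`. In polar coordinates about `w`, the radial derivative of `ψ` is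
`∂ᵣψ = 2 e^{-iθ} ∂_z̄ψ - (i/r) ∂_θψ`, and the integral of `∂_θψ` over a full circle vanishes.
Integrating `∂ᵣψ` in `r` and then over `θ` bounds the integral of `ψ - ψ(w)` over the circle of
radius `R ≤ ε` by `2 ∫₀^R ∫ |∂_z̄ψ| dθ ds` (`norm_circle_integral_sub_le`). The area element
`s ds dθ` cancels the weight `1 / |z - w|`, so this is at most twice the integral in the theorem
(`integral_dbar_eq`). As `φ` is radial, `ψ^ε(w) - ψ(w)` is an integral of these circle
integrals against the density `s φ_ε(s) ds`, of total mass `1 / (2π)` on `(0, ε)`.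

A smooth cutoff reduces the theorem to functions that are `C¹` on the whole plane.
-/

open MeasureTheory Metric

/-- A mollifying kernel: a smooth, nonnegative, radially symmetric function `φ : ℂ → ℝ`
supported in the closed unit disc with `∫ φ dA = 1`. -/
def IsMollifier (φ : ℂ → ℝ) : Prop :=
  ContDiff ℝ (⊤ : ℕ∞) φ ∧ (∀ z, 0 ≤ φ z) ∧ (∀ z w : ℂ, ‖z‖ = ‖w‖ → φ z = φ w) ∧
    Function.support φ ⊆ closedBall (0 : ℂ) 1 ∧ (∫ z : ℂ, φ z) = 1

/-- The `ε`-mollification `ψ^ε(w) := ∫ ψ(w − z) φ_ε(z) dA(z)` where `φ_ε(z) := ε⁻² φ(z/ε)`. -/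
noncomputable def mollify (φ : ℂ → ℝ) (ε : ℝ) (ψ : ℂ → ℂ) (w : ℂ) : ℂ :=
  ∫ z : ℂ, (ε⁻¹ ^ 2 * φ (z / (ε : ℂ))) • ψ (w - z)

open Real in
/-- Integration in polar coordinates for a function `G` vanishing off the disc of radius `ε`, when
`s • G(s e^{iθ})` agrees on `0 < s < ε` with a continuous function `H`. Since `H` absorbs the
Jacobian factor `s`, the function `G` may have a singularity of order `1 / |z|` at the origin. -/
theorem integral_polar {E : Type*} [NormedAddCommGroup E] [NormedSpace ℝ E]
    {G : ℂ → E} {H : ℝ → ℝ → E} {ε : ℝ} (hε : 0 < ε)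
    (hH : Continuous (Function.uncurry H)) (hG : ∀ z, ε ≤ ‖z‖ → G z = 0)
    (hGH : ∀ s θ : ℝ, 0 < s → s < ε → s • G (circleMap 0 s θ) = H s θ) :
    ∫ z, G z = ∫ s in 0..ε, ∫ θ in -π..π, H s θ := by
  have hsymm : ∀ p : ℝ × ℝ, Complex.polarCoord.symm p = circleMap 0 p.1 p.2 := by
    intro p
    rw [Complex.polarCoord_symm_apply, circleMap_zero, Complex.exp_mul_I]
    simp
  rw [← Complex.integral_comp_polarCoord_symm, polarCoord_target]
  have h1 : ∫ p in Set.Ioi (0 : ℝ) ×ˢ Set.Ioo (-π) π, p.1 • G (Complex.polarCoord.symm p)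
      = ∫ p in Set.Ioo (0 : ℝ) ε ×ˢ Set.Ioo (-π) π, p.1 • G (Complex.polarCoord.symm p) := by
    apply setIntegral_eq_of_subset_of_forall_sdiff_eq_zero
    · exact measurableSet_Ioi.prod measurableSet_Ioo
    · exact Set.prod_mono Set.Ioo_subset_Ioi_self le_rfl
    · rintro ⟨s, θ⟩ ⟨⟨hs, hθ⟩, hn⟩
      have hs' : 0 < s := hs
      have : ε ≤ s := by
        by_contra! h
        exact hn ⟨⟨hs', h⟩, hθ⟩
      rw [hsymm, hG _ (by simpa [abs_of_pos hs'] using this), smul_zero]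
  rw [h1]
  have h2 : ∫ p in Set.Ioo (0 : ℝ) ε ×ˢ Set.Ioo (-π) π, p.1 • G (Complex.polarCoord.symm p)
      = ∫ p in Set.Ioo (0 : ℝ) ε ×ˢ Set.Ioo (-π) π, Function.uncurry H p := by
    apply setIntegral_congr_fun (measurableSet_Ioo.prod measurableSet_Ioo)
    rintro ⟨s, θ⟩ ⟨hs, -⟩
    simp only [hsymm]
    exact hGH s θ hs.1 hs.2
  rw [h2, Measure.volume_eq_prod, setIntegral_prod]
  · rw [intervalIntegral.integral_of_le hε.le, integral_Ioc_eq_integral_Ioo]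
    congr 1
    ext s
    rw [intervalIntegral.integral_of_le (by linarith [pi_pos]), integral_Ioc_eq_integral_Ioo]
    rfl
  · exact (hH.continuousOn.integrableOn_compact
      (isCompact_Icc.prod isCompact_Icc : IsCompact (Set.Icc (0 : ℝ) ε ×ˢ Set.Icc (-π) π))).mono_set
      (Set.prod_mono Set.Ioo_subset_Icc_self Set.Ioo_subset_Icc_self)

theorem continuous_dbar_s3 {ψ : ℂ → ℂ} (hψ : ContDiff ℝ 1 ψ) : Continuous (dbar ψ) := by
  have := hψ.continuous_fderiv (by simp)
  unfold dbar
  fun_prop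

theorem continuous_circleMap_uncurry (w : ℂ) :
    Continuous (fun p : ℝ × ℝ => circleMap w p.1 p.2) := by
  unfold circleMap
  fun_prop

/-- The polar form of the Wirtinger derivative, `e^{-iθ} · 2∂_z̄ψ = ∂ᵣψ + (i/r) ∂_θψ`, as an
identity between directional derivatives. -/
theorem fderiv_radial (ψ : ℂ → ℂ) (z : ℂ) (θ : ℝ) :
    fderiv ℝ ψ z (Complex.exp (θ * Complex.I)) =
      2 * Complex.exp (-(θ * Complex.I)) * dbar ψ z
        - Complex.I * fderiv ℝ ψ z (Complex.exp (θ * Complex.I) * Complex.I) := by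
  have h1 : Complex.exp (θ * Complex.I) =
      (Real.cos θ) • (1 : ℂ) + (Real.sin θ) • Complex.I := by
    rw [Complex.exp_mul_I]; simp
  have h2 : Complex.exp (θ * Complex.I) * Complex.I =
      (-Real.sin θ) • (1 : ℂ) + (Real.cos θ) • Complex.I := by
    rw [h1]; simp only [Complex.real_smul]; push_cast
    linear_combination (Complex.sin θ) * Complex.I_mul_I
  have h3 : Complex.exp (-(θ * Complex.I)) =
      (Real.cos θ : ℂ) - (Real.sin θ) * Complex.I := by
    rw [← neg_mul, Complex.exp_mul_I]; simp [Complex.cos_neg, Complex.sin_neg]; ring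
  rw [h2, h1, h3]
  simp only [map_add, map_smul]
  simp only [Complex.real_smul, dbar]
  push_cast
  linear_combination Complex.sin θ * fderiv ℝ ψ z Complex.I * Complex.I_mul_I

open Real in
/-- On a circle, the radial derivative of `ψ` has the same integral as `2 e^{-iθ} ∂_z̄ψ`, because
the angular derivative integrates to zero by periodicity. -/
theorem norm_integral_radial_le {ψ : ℂ → ℂ} (hψ : ContDiff ℝ 1 ψ) (w : ℂ) {s : ℝ} (hs : 0 < s) :
    ‖∫ θ in -π..π, fderiv ℝ ψ (circleMap w s θ) (Complex.exp (θ * Complex.I))‖ ≤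
      2 * ∫ θ in -π..π, ‖dbar ψ (circleMap w s θ)‖ := by
  have hc := hψ.continuous_fderiv (by simp)
  have hd := continuous_dbar_s3 hψ
  have hcm := continuous_circleMap w s
  have hang : ∫ θ in -π..π,
      fderiv ℝ ψ (circleMap w s θ) (Complex.exp (θ * Complex.I) * Complex.I) = 0 := by
    have hder : ∀ θ : ℝ, HasDerivAt (fun θ => ψ (circleMap w s θ))
        (s • fderiv ℝ ψ (circleMap w s θ) (Complex.exp (θ * Complex.I) * Complex.I)) θ := by
      intro θ
      have := ((hψ.differentiable (by simp)) (circleMap w s θ)).hasFDerivAt.comp_hasDerivAt θ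
        (hasDerivAt_circleMap w s θ)
      have hv : circleMap 0 s θ * Complex.I = s • (Complex.exp (θ * Complex.I) * Complex.I) := by
        rw [circleMap_zero, Complex.real_smul, mul_assoc]
      rw [hv, map_smul] at this
      exact this
    have := intervalIntegral.integral_eq_sub_of_hasDerivAt (a := -π) (b := π)
      (fun θ _ => hder θ) (Continuous.intervalIntegrable (by fun_prop) _ _)
    rw [intervalIntegral.integral_smul] at this
    have hper : circleMap w s π = circleMap w s (-π) := by
      rw [← periodic_circleMap w s (-π)]; congr 1; ring
    rw [hper, sub_self] at this
    exact (smul_eq_zero.mp this).resolve_left hs.ne'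
  have heq : ∫ θ in -π..π, fderiv ℝ ψ (circleMap w s θ) (Complex.exp (θ * Complex.I)) =
      ∫ θ in -π..π, 2 * Complex.exp (-(θ * Complex.I)) * dbar ψ (circleMap w s θ) := by
    simp_rw [fderiv_radial]
    rw [intervalIntegral.integral_sub, intervalIntegral.integral_const_mul, hang]
    · simp
    · exact Continuous.intervalIntegrable (by fun_prop) _ _
    · exact Continuous.intervalIntegrable (by fun_prop) _ _
  rw [heq, ← intervalIntegral.integral_const_mul]
  refine intervalIntegral.norm_integral_le_of_norm_le (by linarith [pi_pos])
    (Filter.Eventually.of_forall fun θ _ => ?_) (Continuous.intervalIntegrable (by fun_prop) _ _)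
  rw [← neg_mul, ← Complex.ofReal_neg, norm_mul, norm_mul, Complex.norm_exp_ofReal_mul_I]
  simp

open Real in
theorem norm_circle_integral_sub_le {ψ : ℂ → ℂ} (hψ : ContDiff ℝ 1 ψ) (w : ℂ) {R : ℝ}
    (hR : 0 ≤ R) :
    ‖∫ θ in -π..π, (ψ (circleMap w R θ) - ψ w)‖ ≤
      2 * ∫ s in 0..R, ∫ θ in -π..π, ‖dbar ψ (circleMap w s θ)‖ := by
  have hc := hψ.continuous_fderiv (by simp)
  have hd := continuous_dbar_s3 hψ
  have hcm := continuous_circleMap_uncurry w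
  have hftc : ∀ θ : ℝ, ψ (circleMap w R θ) - ψ w =
      ∫ s in 0..R, fderiv ℝ ψ (circleMap w s θ) (Complex.exp (θ * Complex.I)) := by
    intro θ
    have hder : ∀ s : ℝ, HasDerivAt (fun s : ℝ => ψ (circleMap w s θ))
        (fderiv ℝ ψ (circleMap w s θ) (Complex.exp (θ * Complex.I))) s := by
      intro s
      refine ((hψ.differentiable (by simp)) (circleMap w s θ)).hasFDerivAt.comp_hasDerivAt s ?_
      unfold circleMap
      have := ((Complex.ofRealCLM.hasDerivAt (x := s)).mul_const
        (Complex.exp (θ * Complex.I))).const_add w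
      simpa using this
    have hcs : Continuous fun s : ℝ => circleMap w s θ :=
      hcm.comp (by fun_prop : Continuous fun s : ℝ => (s, θ))
    rw [intervalIntegral.integral_eq_sub_of_hasDerivAt (fun s _ => hder s)
      (Continuous.intervalIntegrable (by fun_prop) _ _)]
    simp
  have hF : Continuous (Function.uncurry fun (θ s : ℝ) =>
      fderiv ℝ ψ (circleMap w s θ) (Complex.exp (θ * Complex.I))) := by
    have : Continuous fun p : ℝ × ℝ => circleMap w p.2 p.1 := hcm.comp continuous_swap
    simp only [Function.uncurry_def]
    fun_prop
  simp_rw [hftc]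
  rw [intervalIntegral_intervalIntegral_swap, ← intervalIntegral.integral_const_mul]
  · refine intervalIntegral.norm_integral_le_of_norm_le hR
      (Filter.Eventually.of_forall fun s hs => norm_integral_radial_le hψ w hs.1) ?_
    refine Continuous.intervalIntegrable (continuous_const.mul ?_) _ _
    exact intervalIntegral.continuous_parametric_intervalIntegral_of_continuous'
      (by simp only [Function.uncurry_def]; fun_prop) _ _
  · exact (hF.continuousOn.integrableOn_compact (isCompact_uIcc.prod isCompact_uIcc)).mono_set
      (Set.prod_mono Set.uIoc_subset_uIcc Set.uIoc_subset_uIcc)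

open Real in
/-- The integral of the theorem in polar coordinates: the Jacobian cancels `1 / |z - w|`. -/
theorem integral_dbar_eq {ψ : ℂ → ℂ} (hψ : ContDiff ℝ 1 ψ) (w : ℂ) {ε : ℝ} (hε : 0 < ε) :
    ∫ z in ball w ε, ‖dbar ψ z‖ / ‖z - w‖ =
      ∫ s in 0..ε, ∫ θ in -π..π, ‖dbar ψ (circleMap w s θ)‖ := by
  have hd := continuous_dbar_s3 hψ
  have hcm := continuous_circleMap_uncurry w
  rw [← integral_indicator measurableSet_ball, ← integral_add_left_eq_self _ w]
  apply integral_polar hε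
  · simp only [Function.uncurry_def]; fun_prop
  · intro z hz
    rw [Set.indicator_of_notMem]
    simpa using hz
  · intro s θ h0 h1
    have : w + circleMap 0 s θ = circleMap w s θ := by simp [circleMap]
    rw [this, Set.indicator_of_mem]
    · simp [circleMap_sub_center, abs_of_pos h0]
      field_simp
    · simpa [abs_of_pos h0, dist_eq_norm, circleMap_sub_center] using h1

theorem IsMollifier.eq_zero {φ : ℂ → ℝ} (hφ : IsMollifier φ) {z : ℂ} (hz : 1 ≤ ‖z‖) :
    φ z = 0 := by
  -- The support is open, so it lies in the interior of the closed disc.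
  have h1 : Function.support φ ⊆ interior (closedBall (0 : ℂ) 1) :=
    interior_maximal hφ.2.2.2.1 hφ.1.continuous.isOpen_support
  rw [interior_closedBall _ one_ne_zero] at h1
  by_contra h
  have := h1 h
  simp at this
  linarith

open Real in
theorem norm_sub_mollify_le {φ : ℂ → ℝ} (hφ : IsMollifier φ) {ψ : ℂ → ℂ} (hψ : ContDiff ℝ 1 ψ)
    (w : ℂ) {ε : ℝ} (hε : 0 < ε) :
    ‖ψ w - mollify φ ε ψ w‖ ≤ 1 / π * ∫ z in ball w ε, ‖dbar ψ z‖ / ‖z - w‖ := by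
  rw [integral_dbar_eq hψ w hε]
  set Φ : ℂ → ℝ := fun z => ε⁻¹ ^ 2 * φ (z / (ε : ℂ)) with hΦ
  set J := ∫ s in 0..ε, ∫ θ in -π..π, ‖dbar ψ (circleMap w s θ)‖ with hJ
  have hφc : Continuous φ := hφ.1.continuous
  have hΦc : Continuous Φ := by fun_prop
  have hψc : Continuous ψ := hψ.continuous
  have hd := continuous_dbar_s3 hψ
  have hcm := continuous_circleMap_uncurry w
  have hΦ0 : ∀ z, 0 ≤ Φ z := fun z => mul_nonneg (by positivity) (hφ.2.1 _)
  have hΦz : ∀ z, ε ≤ ‖z‖ → Φ z = 0 := by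
    intro z hz
    simp only [hΦ]
    rw [hφ.eq_zero, mul_zero]
    rw [norm_div, Complex.norm_real, norm_eq_abs, abs_of_pos hε, le_div_iff₀ hε]
    simpa using hz
  have hΦrad : ∀ z z' : ℂ, ‖z‖ = ‖z'‖ → Φ z = Φ z' := by
    intro z z' h
    simp only [hΦ]
    rw [hφ.2.2.1 (z / ε) (z' / ε) (by rw [norm_div, norm_div, h])]
  have hΦcirc : ∀ s θ : ℝ, Φ (circleMap 0 s θ) = Φ s := fun s θ => hΦrad _ _ (by simp)
  have hΦint : ∫ z, Φ z = 1 := by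
    have h := Measure.integral_comp_inv_smul (volume : Measure ℂ) φ ε
    rw [hφ.2.2.2.2, Complex.finrank_real_complex, abs_of_nonneg (by positivity)] at h
    have h' : (fun z : ℂ => φ (ε⁻¹ • z)) = fun z => φ (z / (ε : ℂ)) := by
      ext z; congr 1; rw [Complex.real_smul]; push_cast; rw [div_eq_inv_mul]
    rw [h'] at h
    simp only [hΦ]
    rw [integral_const_mul, h, smul_eq_mul]
    field_simp
  have hcs : HasCompactSupport Φ :=
    HasCompactSupport.intro (isCompact_closedBall (0 : ℂ) ε) fun z hz => hΦz z (by
      simp at hz; exact hz.le)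
  have hmass : ∫ s in 0..ε, s * Φ s = 1 / (2 * π) := by
    have := integral_polar (G := Φ) (H := fun s _ => s * Φ s) hε
      (by simp only [Function.uncurry_def]; fun_prop) hΦz
      (by intro s θ _ _; rw [hΦcirc, smul_eq_mul])
    rw [hΦint] at this
    simp only [intervalIntegral.integral_const, smul_eq_mul,
      mul_left_comm _ (π - -π), intervalIntegral.integral_const_mul] at this
    rw [eq_div_iff (by positivity), this]
    ring
  have hdiff : mollify φ ε ψ w - ψ w = ∫ z, Φ z • (ψ (w + z) - ψ w) := by
    have h1 : mollify φ ε ψ w = ∫ z, Φ z • ψ (w + z) := by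
      unfold mollify
      rw [← integral_neg_eq_self]
      congr 1
      ext z
      have : Φ (-z) = Φ z := hΦrad _ _ (by simp)
      simp only [hΦ] at this ⊢
      rw [this, sub_neg_eq_add]
    have h2 : ψ w = ∫ z, Φ z • ψ w := by
      rw [integral_smul_const, hΦint, one_smul]
    simp_rw [smul_sub]
    rw [integral_sub, ← h1, ← h2]
    · exact Continuous.integrable_of_hasCompactSupport (by fun_prop) hcs.smul_right
    · exact Continuous.integrable_of_hasCompactSupport (by fun_prop) hcs.smul_right
  have hpolar : ∫ z, Φ z • (ψ (w + z) - ψ w) =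
      ∫ s in 0..ε, ∫ θ in -π..π, (s * Φ s) • (ψ (circleMap w s θ) - ψ w) := by
    apply integral_polar hε
    · simp only [Function.uncurry_def]; fun_prop
    · intro z hz
      rw [hΦz z hz, zero_smul]
    · intro s θ _ _
      have : w + circleMap 0 s θ = circleMap w s θ := by simp [circleMap]
      rw [this, hΦcirc, smul_smul]
  have hJc : Continuous fun s => ∫ θ in -π..π, ‖dbar ψ (circleMap w s θ)‖ :=
    intervalIntegral.continuous_parametric_intervalIntegral_of_continuous'
      (by simp only [Function.uncurry_def]; fun_prop) _ _
  have hJmono : ∀ s, 0 < s → s ≤ ε →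
      ∫ s in 0..s, ∫ θ in -π..π, ‖dbar ψ (circleMap w s θ)‖ ≤ J := by
    intro s h0 h1
    refine intervalIntegral.integral_mono_interval le_rfl h0.le h1
      (Filter.Eventually.of_forall fun s => ?_) (hJc.intervalIntegrable _ _)
    exact intervalIntegral.integral_nonneg (by linarith [pi_pos]) fun _ _ => norm_nonneg _
  rw [norm_sub_rev, hdiff, hpolar]
  calc ‖∫ s in 0..ε, ∫ θ in -π..π, (s * Φ s) • (ψ (circleMap w s θ) - ψ w)‖
      ≤ ∫ s in 0..ε, (s * Φ s) * (2 * J) := by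
        refine intervalIntegral.norm_integral_le_of_norm_le hε.le
          (Filter.Eventually.of_forall fun s hs => ?_)
          (Continuous.intervalIntegrable (by fun_prop) _ _)
        have hs0 : 0 ≤ s * Φ s := mul_nonneg hs.1.le (hΦ0 _)
        rw [intervalIntegral.integral_smul, norm_smul, norm_eq_abs, abs_of_nonneg hs0]
        refine mul_le_mul_of_nonneg_left ?_ hs0
        have := norm_circle_integral_sub_le hψ w hs.1.le
        linarith [hJmono s hs.1 hs.2]
    _ = 1 / π * J := by
        rw [intervalIntegral.integral_mul_const, hmass]
        field_simp

/-- A function that is `C¹` on an open set containing a closed disc coincides on that disc with a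
function that is `C¹` on the plane. -/
theorem exists_contDiff_eqOn {ψ : ℂ → ℂ} {U : Set ℂ} (hU : IsOpen U) (hψ : ContDiffOn ℝ 1 ψ U)
    {w : ℂ} {r R : ℝ} (hr : 0 < r) (hrR : r < R) (hRU : closedBall w R ⊆ U) :
    ∃ g : ℂ → ℂ, ContDiff ℝ 1 g ∧ Set.EqOn g ψ (closedBall w r) := by
  let χ : ContDiffBump w := ⟨r, R, hr, hrR⟩
  refine ⟨fun z => χ z • ψ z, ?_, fun z hz => ?_⟩
  · rw [contDiff_iff_contDiffAt]
    intro z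
    by_cases hz : z ∈ U
    · exact χ.contDiffAt.smul (hψ.contDiffAt (hU.mem_nhds hz))
    · have hz' : z ∈ (closedBall w R)ᶜ := fun h => hz (hRU h)
      refine (contDiffAt_const (c := (0 : ℂ))).congr_of_eventuallyEq ?_
      filter_upwards [isClosed_closedBall.isOpen_compl.mem_nhds hz'] with y hy
      have hy' : R ≤ dist y w := by
        simp at hy
        exact hy.le
      rw [χ.zero_of_le_dist hy', zero_smul]
  · have : χ z = 1 := χ.one_of_mem_closedBall hz
    simp [this]

/-- There is a universal constant `C` such that for every mollifying kernel
`φ`, every `ψ` which is `C¹` on the unit disc, every `w ∈ D_{1/2}` and every `ε ∈ (0, 1/2]`,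
`|ψ(w) − ψ^ε(w)| ≤ C ∫_{D_ε(w)} |∂_z̄ψ(z)|/|z − w| dA(z)`. -/
theorem stmt_3 :
    ∃ C : ℝ, ∀ φ : ℂ → ℝ, IsMollifier φ →
      ∀ ψ : ℂ → ℂ, ContDiffOn ℝ 1 ψ (ball (0 : ℂ) 1) →
        ∀ w ∈ ball (0 : ℂ) (1 / 2), ∀ ε ∈ Set.Ioc (0 : ℝ) (1 / 2),
          ‖ψ w - mollify φ ε ψ w‖ ≤ C * ∫ z in ball w ε, ‖dbar ψ z‖ / ‖z - w‖ := by
  refine ⟨1 / Real.pi, fun φ hφ ψ hψ w hw ε hε => ?_⟩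
  have hε0 : 0 < ε := hε.1
  have hw' : ‖w‖ < 1 / 2 := by simpa using hw
  -- The cutoff radius `R` is the midpoint of `ε` and `1 - ‖w‖`, the distance from `w` to the unit circle.
  obtain ⟨g, hg, hgψ⟩ := exists_contDiff_eqOn (r := ε) (R := (ε + (1 - ‖w‖)) / 2) (w := w)
    isOpen_ball hψ hε0 (by linarith [hε.2]) (by
      apply closedBall_subset_ball'
      rw [dist_zero_right]
      linarith [hε.2])
  have h1 : g w = ψ w := hgψ (mem_closedBall_self hε0.le)
  have h2 : mollify φ ε g w = mollify φ ε ψ w := by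
    unfold mollify
    congr 1
    ext z
    by_cases hz : ‖z‖ ≤ ε
    · rw [hgψ (by simpa [mem_closedBall, dist_eq_norm] using hz)]
    · have : φ (z / (ε : ℂ)) = 0 := by
        apply hφ.eq_zero
        rw [norm_div, Complex.norm_real, Real.norm_eq_abs, abs_of_pos hε0, le_div_iff₀ hε0]
        linarith
      simp [this]
  have h3 : ∫ z in ball w ε, ‖dbar g z‖ / ‖z - w‖ = ∫ z in ball w ε, ‖dbar ψ z‖ / ‖z - w‖ := by
    apply setIntegral_congr_fun measurableSet_ball
    intro z hz
    have : g =ᶠ[nhds z] ψ :=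
      Filter.mem_of_superset (isOpen_ball.mem_nhds hz) fun y hy => hgψ (ball_subset_closedBall hy)
    simp only [dbar, this.fderiv_eq]
  have := norm_sub_mollify_le hφ hg w hε0
  rwa [h1, h2, h3] at this
end

section
/- There exists a universal constant C < ∞ such that the following holds. Let φ be a mollifying kernel, let ψ : D → ℂ be C¹ on the open unit disc, and let ε ∈ (0, 1/2]. Then ∫_{D_{1/2}} |ψ(w) − ψ^ε(w)| dA(w) ≤ C ε ∫_D |∂_z̄ψ| dA. -/
/-!
The constant `C = 2` works. Since the kernel is radial, `ψ - ψ^ε` at `w` is an average, over radii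
`|z| ≤ ε`, of the difference between `ψ(w)` and its circular mean around `w`
(`mollify_eq_circle`). That difference is controlled by `∂_z̄ψ` alone (`circle_bound`): writing
`∂_r ψ = 2 e^{-iθ} ∂_z̄ψ - (i/r) ∂_θ ψ`, the last term integrates to zero over the circle, so
`2π |ψ(w) - mean| ≤ 2 |z| ∫_0^1 ∫_0^{2π} |∂_z̄ψ(w + t e^{iθ} z)| dθ dt`.
Integrating over `w ∈ D_{1/2}`, Tonelli and translation invariance bound the contribution of
each `(z, t, θ)` by `∫_D |∂_z̄ψ|`, since all the points involved stay in `D`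
(`lintegral_translates`, `radial_kernel_bound`).
-/

open MeasureTheory Metric

/-! ### Circular means and the Wirtinger derivative -/

/-- The Wirtinger operator in a rotated frame. With `L` the derivative of `ψ` and `u = e^{iθ}`, this
says `∂_r ψ + (i/r) ∂_θ ψ = 2 e^{-iθ} ∂_z̄ψ`. -/
lemma real_linear_add_I (L : ℂ →L[ℝ] ℂ) (u : ℂ) :
    L u + Complex.I * L (Complex.I * u)
      = (starRingEnd ℂ) u * (L 1 + Complex.I * L Complex.I) := by
  have h1 : u = u.re • (1 : ℂ) + u.im • Complex.I := by
    simp [Complex.re_add_im]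
  have h2 : Complex.I * u = (-u.im) • (1 : ℂ) + u.re • Complex.I := by
    apply Complex.ext <;> simp
  have h3 : (starRingEnd ℂ) u = u.re - u.im * Complex.I := by
    apply Complex.ext <;> simp
  have h4 : L u = u.re • L 1 + u.im • L Complex.I := by
    conv_lhs => rw [h1, map_add, map_smul, map_smul]
  rw [h2, h3, h4, map_add, map_smul, map_smul]
  simp only [Complex.real_smul, Complex.ofReal_neg]
  linear_combination (u.im * L Complex.I) * Complex.I_sq

lemma norm_exp_mul_I (θ : ℝ) (v : ℂ) : ‖Complex.exp (θ * Complex.I) * v‖ = ‖v‖ := by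
  rw [norm_mul, Complex.norm_exp_ofReal_mul_I, one_mul]

lemma hasDerivAt_exp_mul_I (θ : ℝ) :
    HasDerivAt (fun θ : ℝ => Complex.exp (θ * Complex.I))
      (Complex.I * Complex.exp (θ * Complex.I)) θ := by
  have h := ((Complex.ofRealCLM.hasDerivAt (x := θ)).mul_const Complex.I).cexp
  simpa [mul_comm] using h

/-- A Cauchy–Pompeiu estimate. Along each radius `ψ` is the integral of its radial derivative;
averaging over the circle kills the angular derivative, so only `∂_z̄ψ` remains. -/
lemma circle_bound {ψ : ℂ → ℂ} (hψ : ContDiffOn ℝ 1 ψ (ball (0 : ℂ) 1)) (w v : ℂ)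
    (h : closedBall w ‖v‖ ⊆ ball (0 : ℂ) 1) :
    ‖∫ θ in (0 : ℝ)..2 * Real.pi, (ψ (w + Complex.exp (θ * Complex.I) * v) - ψ w)‖ₑ
      ≤ 2 * ‖v‖ₑ * ∫⁻ t in Set.Ioc (0 : ℝ) 1, ∫⁻ θ in Set.Ioc (0 : ℝ) (2 * Real.pi),
          ‖dbar ψ (w + t * (Complex.exp (θ * Complex.I) * v))‖ₑ := by
  have h2pi : (0 : ℝ) ≤ 2 * Real.pi := by positivity
  have hmem : ∀ t ∈ Set.Icc (0 : ℝ) 1, ∀ θ : ℝ,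
      w + t * (Complex.exp (θ * Complex.I) * v) ∈ ball (0 : ℂ) 1 := by
    intro t ht θ
    apply h
    rw [mem_closedBall, dist_eq_norm, add_sub_cancel_left, norm_mul, norm_exp_mul_I,
      Complex.norm_real, Real.norm_of_nonneg ht.1]
    exact mul_le_of_le_one_left (norm_nonneg _) ht.2
  have hD : ∀ z ∈ ball (0 : ℂ) 1, HasFDerivAt ψ (fderiv ℝ ψ z) z := fun z hz =>
    ((hψ.differentiableOn one_ne_zero).differentiableAt (isOpen_ball.mem_nhds hz)).hasFDerivAt
  have hDc : ContinuousOn (fderiv ℝ ψ) (ball (0 : ℂ) 1) :=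
    hψ.continuousOn_fderiv_of_isOpen isOpen_ball le_rfl
  have hPc : Continuous fun p : ℝ × ℝ =>
      w + (p.1 : ℂ) * (Complex.exp (p.2 * Complex.I) * v) := by fun_prop
  -- joint continuity of the derivative applied to a continuous direction field
  have hAc : ∀ u : ℝ × ℝ → ℂ, Continuous u → ContinuousOn (fun p : ℝ × ℝ =>
      fderiv ℝ ψ (w + (p.1 : ℂ) * (Complex.exp (p.2 * Complex.I) * v)) (u p))
      (Set.Icc (0 : ℝ) 1 ×ˢ Set.univ) := by
    intro u hu
    refine ContinuousOn.clm_apply (hDc.comp hPc.continuousOn ?_) hu.continuousOn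
    exact fun p hp => hmem p.1 hp.1 p.2
  have hAθ : ∀ t ∈ Set.Icc (0 : ℝ) 1, ∀ u : ℝ → ℂ, Continuous u → Continuous (fun θ : ℝ =>
      fderiv ℝ ψ (w + (t : ℂ) * (Complex.exp (θ * Complex.I) * v)) (u θ)) := by
    intro t ht u hu
    have := (hAc (fun p => u p.2) (by fun_prop)).comp_continuous (f := fun θ : ℝ => (t, θ))
      (by fun_prop) (fun θ => ⟨ht, Set.mem_univ _⟩)
    exact this
  have hec : Continuous fun θ : ℝ => Complex.exp (θ * Complex.I) * v := by fun_prop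
  have hradial : ∀ θ : ℝ, ψ (w + Complex.exp (θ * Complex.I) * v) - ψ w
      = ∫ t in (0 : ℝ)..1, fderiv ℝ ψ (w + t * (Complex.exp (θ * Complex.I) * v))
          (Complex.exp (θ * Complex.I) * v) := by
    intro θ
    rw [intervalIntegral.integral_eq_sub_of_hasDerivAt
      (f := fun t : ℝ => ψ (w + t * (Complex.exp (θ * Complex.I) * v)))]
    · simp
    · intro t ht
      rw [Set.uIcc_of_le zero_le_one] at ht
      have h1 : HasDerivAt (fun t : ℝ => w + t * (Complex.exp (θ * Complex.I) * v))
          (Complex.exp (θ * Complex.I) * v) t := by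
        simpa using ((Complex.ofRealCLM.hasDerivAt (x := t)).mul_const
          (Complex.exp (θ * Complex.I) * v)).const_add w
      exact (hD _ (hmem t ht θ)).comp_hasDerivAt t h1
    · apply ContinuousOn.intervalIntegrable
      rw [Set.uIcc_of_le zero_le_one]
      exact (hAc (fun p => Complex.exp (p.2 * Complex.I) * v) (by fun_prop)).comp
        (f := fun t : ℝ => (t, θ)) (by fun_prop) (fun t ht => ⟨ht, Set.mem_univ _⟩)
  -- the angular derivative is that of a periodic function
  have hangular : ∀ t ∈ Set.Icc (0 : ℝ) 1, ∫ θ in (0 : ℝ)..2 * Real.pi,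
      fderiv ℝ ψ (w + t * (Complex.exp (θ * Complex.I) * v))
        (t * (Complex.I * (Complex.exp (θ * Complex.I) * v))) = 0 := by
    intro t ht
    rw [intervalIntegral.integral_eq_sub_of_hasDerivAt
      (f := fun θ : ℝ => ψ (w + t * (Complex.exp (θ * Complex.I) * v)))]
    · simp [Complex.exp_two_pi_mul_I]
    · intro θ _
      have h1 : HasDerivAt (fun θ : ℝ => w + t * (Complex.exp (θ * Complex.I) * v))
          (t * (Complex.I * (Complex.exp (θ * Complex.I) * v))) θ := by
        have := (((hasDerivAt_exp_mul_I θ).mul_const v).const_mul (t : ℂ)).const_add w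
        simpa [mul_assoc] using this
      exact (hD _ (hmem t ht θ)).comp_hasDerivAt θ h1
    · exact (hAθ t ht (fun θ => t * (Complex.I * (Complex.exp (θ * Complex.I) * v)))
        (by fun_prop)).intervalIntegrable _ _
  have hcircle : ∀ t ∈ Set.Ioc (0 : ℝ) 1, ∫ θ in (0 : ℝ)..2 * Real.pi,
      fderiv ℝ ψ (w + t * (Complex.exp (θ * Complex.I) * v)) (Complex.exp (θ * Complex.I) * v)
      = ∫ θ in (0 : ℝ)..2 * Real.pi, (starRingEnd ℂ) (Complex.exp (θ * Complex.I) * v) *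
          (2 * dbar ψ (w + t * (Complex.exp (θ * Complex.I) * v))) := by
    intro t ht
    have ht' : t ∈ Set.Icc (0 : ℝ) 1 := ⟨ht.1.le, ht.2⟩
    have hz : ∫ θ in (0 : ℝ)..2 * Real.pi,
        fderiv ℝ ψ (w + t * (Complex.exp (θ * Complex.I) * v))
          (Complex.I * (Complex.exp (θ * Complex.I) * v)) = 0 := by
      have h0 := hangular t ht'
      simp_rw [← Complex.real_smul (x := t) (z := Complex.I * _), map_smul] at h0
      rw [intervalIntegral.integral_smul] at h0
      exact (smul_eq_zero.1 h0).resolve_left ht.1.ne'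
    have hsum : ∀ θ : ℝ, (starRingEnd ℂ) (Complex.exp (θ * Complex.I) * v) *
          (2 * dbar ψ (w + t * (Complex.exp (θ * Complex.I) * v)))
        = fderiv ℝ ψ (w + t * (Complex.exp (θ * Complex.I) * v)) (Complex.exp (θ * Complex.I) * v)
          + Complex.I * fderiv ℝ ψ (w + t * (Complex.exp (θ * Complex.I) * v))
              (Complex.I * (Complex.exp (θ * Complex.I) * v)) := by
      intro θ
      rw [real_linear_add_I, dbar]
      ring
    simp_rw [hsum]
    rw [intervalIntegral.integral_add, intervalIntegral.integral_const_mul, hz, mul_zero, add_zero]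
    · exact (hAθ t ht' _ hec).intervalIntegrable _ _
    · exact ((hAθ t ht' _ (continuous_const.mul hec)).intervalIntegrable _ _).const_mul _
  simp_rw [hradial]
  rw [intervalIntegral_intervalIntegral_swap, intervalIntegral.integral_of_le zero_le_one,
    setIntegral_congr_fun measurableSet_Ioc hcircle]
  · refine (enorm_integral_le_lintegral_enorm _).trans ?_
    rw [← lintegral_const_mul' _ _ (by finiteness)]
    refine lintegral_mono fun t => ?_
    dsimp only
    rw [intervalIntegral.integral_of_le h2pi, ← lintegral_const_mul' _ _ (by finiteness)]
    refine (enorm_integral_le_lintegral_enorm _).trans (lintegral_mono fun θ => ?_)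
    have hn : ‖(starRingEnd ℂ) (Complex.exp (θ * Complex.I) * v)‖ₑ = ‖v‖ₑ := by
      rw [← ofReal_norm, ← ofReal_norm, RCLike.norm_conj, norm_exp_mul_I]
    have h2 : ‖(2 : ℂ)‖ₑ = 2 := by
      rw [← ofReal_norm]; simp
    rw [enorm_mul, enorm_mul, hn, h2, ← mul_assoc, mul_comm ‖v‖ₑ]
  · rw [Set.uIoc_of_le zero_le_one, Set.uIoc_of_le h2pi]
    have hc := (hAc (fun p => Complex.exp (p.2 * Complex.I) * v) (by fun_prop)).mono
      (t := Set.Icc (0 : ℝ) 1 ×ˢ Set.Icc (0 : ℝ) (2 * Real.pi))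
      (Set.prod_mono_right (Set.subset_univ _))
    have hi := (hc.integrableOn_compact (μ := volume) (isCompact_Icc.prod isCompact_Icc)).swap
    refine IntegrableOn.mono_set (t := Set.Icc (0 : ℝ) (2 * Real.pi) ×ˢ Set.Icc (0 : ℝ) 1) hi ?_
    exact Set.prod_mono Set.Ioc_subset_Icc_self Set.Ioc_subset_Icc_self

/-! ### Mollification by a radial kernel -/

/-- Averaging over rotations: a radial kernel only sees the circular means of `ψ` around `w`. -/
lemma mollify_eq_circle {ψ : ℂ → ℂ} {k : ℂ → ℝ} (hψ : ContinuousOn ψ (ball (0 : ℂ) 1))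
    (hk : Continuous k) (hrad : ∀ z w : ℂ, ‖z‖ = ‖w‖ → k z = k w) {ε : ℝ}
    (hsupp : Function.support k ⊆ closedBall (0 : ℂ) ε) (hint : ∫ z, k z = 1) {w : ℂ}
    (hw : closedBall w ε ⊆ ball (0 : ℂ) 1) :
    ((2 * Real.pi : ℝ) : ℂ) * ((∫ z, k z • ψ (w - z)) - ψ w)
      = ∫ z, k z • ∫ θ in (0 : ℝ)..2 * Real.pi,
          (ψ (w + Complex.exp (θ * Complex.I) * (-z)) - ψ w) := by
  have hmem : ∀ z ∈ closedBall (0 : ℂ) ε, ∀ θ : ℝ,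
      w + Complex.exp (θ * Complex.I) * (-z) ∈ ball (0 : ℂ) 1 := by
    intro z hz θ
    apply hw
    rw [mem_closedBall, dist_eq_norm, add_sub_cancel_left, norm_exp_mul_I, norm_neg]
    simpa using hz
  have hF : ContinuousOn (fun p : ℝ × ℂ => k p.2 • (ψ (w + Complex.exp (p.1 * Complex.I) * (-p.2))
      - ψ w)) (Set.univ ×ˢ closedBall (0 : ℂ) ε) := by
    refine (hk.comp continuous_snd).continuousOn.smul (ContinuousOn.sub ?_ continuousOn_const)
    exact hψ.comp (by fun_prop) fun p hp => hmem p.2 hp.2 p.1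
  have hzero : ∀ z ∉ closedBall (0 : ℂ) ε, k z = 0 := fun z hz => by
    by_contra h
    exact hz (hsupp h)
  have hFubini : Integrable (Function.uncurry fun (θ : ℝ) (z : ℂ) =>
      k z • (ψ (w + Complex.exp (θ * Complex.I) * (-z)) - ψ w))
      ((volume.restrict (Set.uIoc (0 : ℝ) (2 * Real.pi))).prod volume) := by
    have h1 : IntegrableOn (Function.uncurry fun (θ : ℝ) (z : ℂ) =>
        k z • (ψ (w + Complex.exp (θ * Complex.I) * (-z)) - ψ w))
        (Set.uIcc (0 : ℝ) (2 * Real.pi) ×ˢ closedBall (0 : ℂ) ε) (volume.prod volume) :=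
      (hF.mono (Set.prod_mono_left (Set.subset_univ _))).integrableOn_compact
        (isCompact_uIcc.prod (isCompact_closedBall _ _))
    have h2 : IntegrableOn (Function.uncurry fun (θ : ℝ) (z : ℂ) =>
        k z • (ψ (w + Complex.exp (θ * Complex.I) * (-z)) - ψ w))
        (Set.uIoc (0 : ℝ) (2 * Real.pi) ×ˢ Set.univ) (volume.prod volume) := by
      refine h1.of_forall_sdiff_eq_zero (measurableSet_uIoc.prod MeasurableSet.univ) ?_
      rintro ⟨θ, z⟩ ⟨⟨hθ, -⟩, hz⟩
      have : z ∉ closedBall (0 : ℂ) ε := fun hz' => hz ⟨Set.uIoc_subset_uIcc hθ, hz'⟩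
      simp [hzero z this]
    rw [IntegrableOn, ← Measure.prod_restrict, Measure.restrict_univ] at h2
    exact h2
  have hrot : ∀ θ : ℝ, ∫ z, k z • (ψ (w + Complex.exp (θ * Complex.I) * (-z)) - ψ w)
      = ∫ z, k z • (ψ (w - z) - ψ w) := by
    intro θ
    have hmp := (rotation (Circle.exp θ)).measurePreserving.integral_comp
      (rotation (Circle.exp θ)).toHomeomorph.measurableEmbedding
      (fun z => k z • (ψ (w - z) - ψ w))
    rw [← hmp]
    refine integral_congr_ae (Filter.Eventually.of_forall fun z => ?_)
    simp only [rotation_apply, Circle.coe_exp]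
    rw [hrad z (Complex.exp (θ * Complex.I) * z) (norm_exp_mul_I θ z).symm, mul_neg,
      ← sub_eq_add_neg]
  have hik : Integrable k := by
    by_contra h
    rw [integral_undef h] at hint
    exact zero_ne_one hint
  have hiψ : Integrable fun z => k z • ψ (w - z) := by
    have h1 : IntegrableOn (fun z => k z • ψ (w - z)) (closedBall (0 : ℂ) ε) := by
      refine (hk.continuousOn.smul (hψ.comp (by fun_prop) fun z hz => ?_)).integrableOn_compact
        (isCompact_closedBall _ _)
      apply hw
      simpa [dist_eq_norm] using hz
    exact h1.integrable_of_forall_notMem_eq_zero fun z hz => by simp [hzero z hz]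
  calc ((2 * Real.pi : ℝ) : ℂ) * ((∫ z, k z • ψ (w - z)) - ψ w)
      = ∫ θ in (0 : ℝ)..2 * Real.pi, ∫ z, k z • (ψ (w + Complex.exp (θ * Complex.I) * (-z))
          - ψ w) := by
        simp_rw [hrot, smul_sub]
        rw [intervalIntegral.integral_const, integral_sub hiψ (hik.smul_const _),
          integral_smul_const, hint, one_smul, sub_zero, Complex.real_smul]
    _ = _ := by
        rw [intervalIntegral_integral_swap hFubini]
        simp_rw [intervalIntegral.integral_smul]

/-! ### The `L¹` estimate -/

lemma lintegral_translates {X : Type*} [MeasurableSpace X] (μ : Measure X) [SFinite μ]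
    {g : ℂ → ENNReal} (hg : Measurable g) {a : X → ENNReal} (ha : Measurable a) {c : X → ℂ}
    (hc : Measurable c) :
    ∫⁻ w, ∫⁻ x, a x * g (w + c x) ∂μ = (∫⁻ x, a x ∂μ) * ∫⁻ z, g z := by
  rw [lintegral_lintegral_swap (by fun_prop)]
  have : ∀ x, ∫⁻ w, a x * g (w + c x) = a x * ∫⁻ z, g z := by
    intro x
    rw [lintegral_const_mul _ (by fun_prop), lintegral_add_right_eq_self]
  simp_rw [this]
  rw [lintegral_mul_const _ ha]

lemma measurable_dbar (ψ : ℂ → ℂ) : Measurable (dbar ψ) := by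
  unfold dbar
  have h1 := measurable_fderiv_apply_const ℝ ψ (1 : ℂ)
  have h2 := measurable_fderiv_apply_const ℝ ψ Complex.I
  fun_prop

/-- The estimate with `C = 2` for a radial kernel `k` already scaled to radius `ε`. -/
lemma radial_kernel_bound {ψ : ℂ → ℂ} {k : ℂ → ℝ} (hψ : ContDiffOn ℝ 1 ψ (ball (0 : ℂ) 1))
    (hk : Continuous k) (hpos : ∀ z, 0 ≤ k z) (hrad : ∀ z w : ℂ, ‖z‖ = ‖w‖ → k z = k w) {ε : ℝ}
    (hsupp : Function.support k ⊆ closedBall (0 : ℂ) ε) (hint : ∫ z, k z = 1)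
    (hε' : ε ≤ 1 / 2) :
    ∫⁻ w in ball (0 : ℂ) (1 / 2), ‖ψ w - ∫ z, k z • ψ (w - z)‖ₑ
      ≤ ENNReal.ofReal (2 * ε) * ∫⁻ z in ball (0 : ℂ) 1, ‖dbar ψ z‖ₑ := by
  have hsub : ∀ w ∈ ball (0 : ℂ) (1 / 2), closedBall w ε ⊆ ball (0 : ℂ) 1 := by
    intro w hw
    refine closedBall_subset_ball' ?_
    rw [mem_ball] at hw
    linarith
  set g : ℂ → ENNReal := (ball (0 : ℂ) 1).indicator fun z => ‖dbar ψ z‖ₑ with hg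
  have hgm : Measurable g := (measurable_dbar ψ).enorm.indicator measurableSet_ball
  have hgint : ∫⁻ z, g z = ∫⁻ z in ball (0 : ℂ) 1, ‖dbar ψ z‖ₑ :=
    lintegral_indicator measurableSet_ball _
  set μ : Measure (ℂ × ℝ × ℝ) := (volume : Measure ℂ).prod
    ((volume.restrict (Set.Ioc (0 : ℝ) 1)).prod
      (volume.restrict (Set.Ioc (0 : ℝ) (2 * Real.pi)))) with hμ
  set c : ℂ × ℝ × ℝ → ℂ := fun x => x.2.1 * (Complex.exp (x.2.2 * Complex.I) * (-x.1)) with hc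
  have hcm : Measurable c := (by fun_prop : Continuous c).measurable
  have ham : Measurable fun x : ℂ × ℝ × ℝ => ENNReal.ofReal (2 * ε) * ENNReal.ofReal (k x.1) := by
    fun_prop
  have hpt : ∀ w ∈ ball (0 : ℂ) (1 / 2),
      ENNReal.ofReal (2 * Real.pi) * ‖ψ w - ∫ z, k z • ψ (w - z)‖ₑ
        ≤ ∫⁻ x, ENNReal.ofReal (2 * ε) * ENNReal.ofReal (k x.1) * g (w + c x) ∂μ := by
    intro w hw
    have h1 : ENNReal.ofReal (2 * Real.pi) * ‖ψ w - ∫ z, k z • ψ (w - z)‖ₑ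
        = ‖((2 * Real.pi : ℝ) : ℂ) * ((∫ z, k z • ψ (w - z)) - ψ w)‖ₑ := by
      rw [enorm_mul, ← ofReal_norm ((2 * Real.pi : ℝ) : ℂ), Complex.norm_real,
        Real.norm_of_nonneg (by positivity), ← enorm_neg (ψ w - _), neg_sub]
    rw [h1, mollify_eq_circle hψ.continuousOn hk hrad hsupp hint (hsub w hw), hμ,
      lintegral_prod _ (by fun_prop)]
    refine (enorm_integral_le_lintegral_enorm _).trans (lintegral_mono fun z => ?_)
    dsimp only
    rw [lintegral_prod _ (by fun_prop), enorm_smul, Real.enorm_of_nonneg (hpos z)]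
    by_cases hz : z ∈ closedBall (0 : ℂ) ε
    swap
    · have : k z = 0 := by
        by_contra h
        exact hz (hsupp h)
      simp [this]
    have hz' : ‖-z‖ ≤ ε := by simpa using hz
    have hsub' := (closedBall_subset_closedBall hz').trans (hsub w hw)
    have h2 := circle_bound hψ w (-z) hsub'
    have h3 : ∀ t ∈ Set.Ioc (0 : ℝ) 1, ∀ θ : ℝ,
        ‖dbar ψ (w + t * (Complex.exp (θ * Complex.I) * (-z)))‖ₑ = g (w + c (z, t, θ)) := by
      intro t ht θ
      rw [hg, Set.indicator_of_mem]
      apply hsub'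
      rw [mem_closedBall, dist_eq_norm, add_sub_cancel_left, hc]
      dsimp only
      rw [norm_mul, norm_exp_mul_I, Complex.norm_real, Real.norm_of_nonneg ht.1.le]
      exact mul_le_of_le_one_left (norm_nonneg _) ht.2
    have h4 : 2 * ‖-z‖ₑ ≤ ENNReal.ofReal (2 * ε) := by
      rw [ENNReal.ofReal_mul zero_le_two, ENNReal.ofReal_ofNat, ← ofReal_norm]
      gcongr
    have h5 : ∫⁻ t in Set.Ioc (0 : ℝ) 1, ∫⁻ θ in Set.Ioc (0 : ℝ) (2 * Real.pi),
          ‖dbar ψ (w + t * (Complex.exp (θ * Complex.I) * (-z)))‖ₑ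
        = ∫⁻ t in Set.Ioc (0 : ℝ) 1, ∫⁻ θ in Set.Ioc (0 : ℝ) (2 * Real.pi),
          g (w + c (z, t, θ)) :=
      setLIntegral_congr_fun measurableSet_Ioc fun t ht => by simp_rw [h3 t ht]
    rw [h5] at h2
    simp_rw [lintegral_const_mul' (ENNReal.ofReal (2 * ε) * ENNReal.ofReal (k z)) _ (by finiteness)]
    rw [mul_comm (ENNReal.ofReal (2 * ε)), mul_assoc]
    gcongr
    exact h2.trans (by gcongr)
  have hmass : ∫⁻ x, ENNReal.ofReal (2 * ε) * ENNReal.ofReal (k x.1) ∂μ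
      = ENNReal.ofReal (2 * Real.pi) * ENNReal.ofReal (2 * ε) := by
    have hik : Integrable k := by
      by_contra h
      rw [integral_undef h] at hint
      exact zero_ne_one hint
    have hk1 : ∫⁻ z, ENNReal.ofReal (k z) = 1 := by
      rw [← ofReal_integral_eq_lintegral_ofReal hik (Filter.Eventually.of_forall hpos), hint,
        ENNReal.ofReal_one]
    rw [hμ, lintegral_prod _ (by fun_prop)]
    simp only [lintegral_const]
    rw [lintegral_mul_const _ (by fun_prop), lintegral_const_mul _ (by fun_prop), hk1, mul_one,
      mul_comm, ← Set.univ_prod_univ, Measure.prod_prod]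
    simp
  have h2pi : ENNReal.ofReal (2 * Real.pi) ≠ 0 := by
    simpa using Real.pi_pos
  rw [← ENNReal.mul_le_mul_iff_right h2pi ENNReal.ofReal_ne_top, ← mul_assoc, ← hmass, ← hgint,
    ← lintegral_translates μ hgm ham hcm, ← lintegral_const_mul' _ _ ENNReal.ofReal_ne_top]
  exact (setLIntegral_mono' measurableSet_ball hpt).trans (setLIntegral_le_lintegral _ _)

/-- There is a universal constant `C` such that for every mollifying kernel
`φ`, every `ψ` which is `C¹` on the unit disc, and every `ε ∈ (0, 1/2]`,
`∫_{D_{1/2}} |ψ(w) − ψ^ε(w)| dA(w) ≤ C ε ∫_D |∂_z̄ψ| dA`. -/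
theorem stmt_4 :
    ∃ C : ℝ, ∀ φ : ℂ → ℝ, IsMollifier φ →
      ∀ ψ : ℂ → ℂ, ContDiffOn ℝ 1 ψ (ball (0 : ℂ) 1) →
        ∀ ε ∈ Set.Ioc (0 : ℝ) (1 / 2),
          (∫⁻ w in ball (0 : ℂ) (1 / 2), ‖ψ w - mollify φ ε ψ w‖₊)
            ≤ ENNReal.ofReal (C * ε) * ∫⁻ z in ball (0 : ℂ) 1, ‖dbar ψ z‖₊ := by
  refine ⟨2, ?_⟩
  rintro φ ⟨hsm, hpos, hrad, hsupp, hint⟩ ψ hψ ε ⟨hε, hε'⟩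
  have hφc : Continuous φ := hsm.continuous
  refine radial_kernel_bound (k := fun z => ε⁻¹ ^ 2 * φ (z / (ε : ℂ))) hψ (by fun_prop)
    (fun z => mul_nonneg (by positivity) (hpos _)) ?_ ?_ ?_ hε'
  · intro z w hzw
    rw [hrad (z / ε) (w / ε) (by rw [norm_div, norm_div, hzw])]
  · intro z hz
    have h1 : z / (ε : ℂ) ∈ closedBall (0 : ℂ) 1 := hsupp fun h => hz (by simp [h])
    rw [mem_closedBall_zero_iff, norm_div, Complex.norm_real, Real.norm_of_nonneg hε.le,
      div_le_one hε] at h1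
    simpa using h1
  · have h1 : ∀ z : ℂ, z / (ε : ℂ) = ε⁻¹ • z := by
      intro z
      rw [Complex.real_smul, Complex.ofReal_inv, div_eq_inv_mul]
    simp_rw [h1]
    rw [integral_const_mul, Measure.integral_comp_inv_smul_of_nonneg _ _ hε.le, hint,
      Complex.finrank_real_complex]
    simp [hε.ne']
end

section
/- Fix a mollifying kernel φ and ε ∈ (0, 1/2). Then the set of restrictions to D_{1/2} of the ε-mollifications ψ^ε, as ψ ranges over all functions in L¹(D, ℂ) with ‖ψ‖_{L¹(D)} ≤ 1 (extended by zero outside D before mollifying), is a totally bounded subset of L¹(D_{1/2}, ℂ). -/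
/-!
Put `k(z) = ε⁻² φ(z/ε)`, a continuous compactly supported kernel. After a change of variables
`ψ^ε(w) = ∫_D ψ(z) k(w - z) dA(z)`, so `ψ^ε` is the Bochner integral `∫_D ψ(z) • G(z) dA(z)` in the
space of bounded continuous functions, where `G(z) = k(· - z)`. The map `G` is continuous because
`k` is uniformly continuous, hence `{c • G(a) : |c| ≤ 1, |a| ≤ 1}` is compact and its closed convex
hull is totally bounded. When `‖ψ‖_{L¹(D)} ≤ 1` the integral lies in that hull, by Hahn-Banach
separation. Finally, the inclusion of bounded continuous functions into `L¹(D_{1/2})` is linear and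
continuous, so it preserves total boundedness.
-/

open MeasureTheory Metric

open BoundedContinuousFunction

/-- A mixture `∫ ψ • G` with `‖ψ‖_{L¹} ≤ 1` lies in every closed convex set containing `0` and all
the vectors `c • G z` with `|c| ≤ 1`: a separating functional `f` with `f ≤ u` on the set satisfies
`f (∫ ψ • G) ≤ ∫ ‖ψ‖ u ≤ u`. -/
lemma integral_smul_mem_of_norm_le_one {X E : Type*} [MeasurableSpace X] {μ : Measure X}
    [NormedAddCommGroup E] [NormedSpace ℂ E] [CompleteSpace E]
    {S : Set E} (hconv : Convex ℝ S) (hclosed : IsClosed S) (h0 : (0 : E) ∈ S)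
    {ψ : X → ℂ} {G : X → E} (hψ : Integrable ψ μ) (hψ1 : ∫ x, ‖ψ x‖ ∂μ ≤ 1)
    (hint : Integrable (fun x => ψ x • G x) μ)
    (hG : ∀ᵐ x ∂μ, ∀ c : ℂ, ‖c‖ ≤ 1 → c • G x ∈ S) :
    ∫ x, ψ x • G x ∂μ ∈ S := by
  by_contra hnot
  obtain ⟨f, u, hfS, hfu⟩ := geometric_hahn_banach_closed_point hconv hclosed hnot
  have hu : 0 < u := by simpa using hfS 0 h0
  have hle : f (∫ x, ψ x • G x ∂μ) ≤ ∫ x, ‖ψ x‖ * u ∂μ := by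
    rw [← f.integral_comp_comm hint]
    refine integral_mono_ae (f.integrable_comp hint) (hψ.norm.mul_const u) ?_
    filter_upwards [hG] with x hx
    rcases eq_or_ne (ψ x) 0 with h | h
    · simp [h]
    · have hn : (‖ψ x‖ : ℂ) ≠ 0 := by simpa using h
      -- polar decomposition `ψ = |ψ| · (ψ / |ψ|)`
      have hsplit : ψ x • G x = ‖ψ x‖ • ((ψ x / (‖ψ x‖ : ℂ)) • G x) := by
        rw [← Complex.coe_smul, smul_smul, mul_div_cancel₀ _ hn]
      have hmem := hx (ψ x / (‖ψ x‖ : ℂ)) (by simp [h])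
      show f (ψ x • G x) ≤ ‖ψ x‖ * u
      rw [hsplit, map_smul, smul_eq_mul]
      exact mul_le_mul_of_nonneg_left (hfS _ hmem).le (norm_nonneg _)
  rw [integral_mul_const] at hle
  nlinarith

/-- The translates `w ↦ k (w - a)` of a continuous, compactly supported kernel depend continuously
on `a` in the uniform norm. -/
lemma exists_continuous_translates {k : ℂ → ℂ} (hk : Continuous k) (hs : HasCompactSupport k) :
    ∃ G : ℂ → (ℂ →ᵇ ℂ), Continuous G ∧ ∀ a w, G a w = k (w - a) := by
  obtain ⟨M, hM⟩ := hs.exists_bound_of_continuous hk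
  refine ⟨fun a => ofNormedAddCommGroup (fun w => k (w - a)) (by fun_prop) M (fun w => hM _),
    ?_, fun a w => rfl⟩
  have huc := hs.uniformContinuous_of_continuous hk
  rw [Metric.uniformContinuous_iff] at huc
  rw [Metric.continuous_iff]
  intro b δ hδ
  obtain ⟨η, hη, h⟩ := huc (δ / 2) (half_pos hδ)
  refine ⟨η, hη, fun a hab => lt_of_le_of_lt ?_ (half_lt_self hδ)⟩
  refine (BoundedContinuousFunction.dist_le (half_pos hδ).le).2 fun w => (h ?_).le
  rwa [dist_sub_left]

/-- The mollification of `ψ` extended by zero, written as an integral over the unit disc against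
translates of the kernel. -/
lemma mollify_indicator_eq (φ : ℂ → ℝ) (ε : ℝ) (ψ : ℂ → ℂ) (w : ℂ) :
    mollify φ ε ((ball (0 : ℂ) 1).indicator ψ) w =
      ∫ z in ball (0 : ℂ) 1, ψ z * ((ε⁻¹ ^ 2 * φ ((w - z) / (ε : ℂ)) : ℝ) : ℂ) := by
  unfold mollify
  rw [← integral_sub_left_eq_self _ volume w, ← integral_indicator measurableSet_ball]
  congr 1
  ext z
  by_cases hz : z ∈ ball (0 : ℂ) 1
  · simp only [sub_sub_cancel, Set.indicator_of_mem hz, Complex.real_smul]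
    ring
  · simp only [sub_sub_cancel, Set.indicator_of_notMem hz, smul_zero]

/-- For a fixed mollifying kernel `φ` and fixed `ε ∈ (0, 1/2)`, the set of
restrictions to `D_{1/2}` of the `ε`-mollifications `ψ^ε`, as `ψ` ranges over the unit ball of
`L¹(D, ℂ)` (extended by zero outside `D` before mollifying), is a totally bounded subset of
`L¹(D_{1/2}, ℂ)`. -/
theorem stmt_5 (φ : ℂ → ℝ) (hφ : IsMollifier φ) (ε : ℝ) (hε : ε ∈ Set.Ioo (0 : ℝ) (1 / 2)) :
    TotallyBounded {f : Lp ℂ 1 (volume.restrict (ball (0 : ℂ) (1 / 2))) |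
      ∃ ψ : ℂ → ℂ, IntegrableOn ψ (ball (0 : ℂ) 1) ∧
        (∫ z in ball (0 : ℂ) 1, ‖ψ z‖) ≤ 1 ∧
        (f : ℂ → ℂ) =ᵐ[volume.restrict (ball (0 : ℂ) (1 / 2))]
          mollify φ ε ((ball (0 : ℂ) 1).indicator ψ)} := by
  obtain ⟨hsmooth, -, -, hsupp, -⟩ := hφ
  have hε0 : 0 < ε := hε.1
  have hφc : Continuous φ := hsmooth.continuous
  obtain ⟨G, hGc, hG⟩ := exists_continuous_translates
    (k := fun z => ((ε⁻¹ ^ 2 * φ (z / (ε : ℂ)) : ℝ) : ℂ)) (by fun_prop) (by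
      refine HasCompactSupport.intro (isCompact_closedBall (0 : ℂ) ε) fun z hz => ?_
      have : φ (z / (ε : ℂ)) = 0 := by
        by_contra hne
        have h1 := hsupp hne
        rw [mem_closedBall_zero_iff, norm_div, Complex.norm_real, Real.norm_of_nonneg hε0.le,
          div_le_one hε0] at h1
        exact hz (by simpa using h1)
      simp [this])
  let K : Set (ℂ →ᵇ ℂ) :=
    (fun p : ℂ × ℂ => p.1 • G p.2) '' (closedBall (0 : ℂ) 1 ×ˢ closedBall (0 : ℂ) 1)
  have hK : IsCompact K :=
    ((isCompact_closedBall _ _).prod (isCompact_closedBall _ _)).image (by fun_prop)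
  let S : Set (ℂ →ᵇ ℂ) := closure (convexHull ℝ K)
  have hKS : K ⊆ S := (subset_convexHull ℝ K).trans subset_closure
  have hS : TotallyBounded S := (totallyBounded_convexHull.2 hK.totallyBounded).closure
  have : IsFiniteMeasure (volume.restrict (ball (0 : ℂ) (1 / 2))) :=
    ⟨by rw [Measure.restrict_apply_univ]; exact measure_ball_lt_top⟩
  let L := BoundedContinuousFunction.toLp (E := ℂ) (p := 1)
    (volume.restrict (ball (0 : ℂ) (1 / 2))) ℂ
  refine (hS.image L.uniformContinuous).subset ?_
  rintro f ⟨ψ, hψ, hψ1, hf⟩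
  have hball : ∀ᵐ z ∂(volume.restrict (ball (0 : ℂ) 1)), z ∈ ball (0 : ℂ) 1 :=
    ae_restrict_mem measurableSet_ball
  have hint : Integrable (fun z => ψ z • G z) (volume.restrict (ball (0 : ℂ) 1)) := by
    obtain ⟨C, hC⟩ := (isCompact_closedBall (0 : ℂ) 1).exists_bound_of_continuousOn
      hGc.continuousOn
    refine Integrable.mono' (hψ.norm.mul_const C)
      (hψ.aestronglyMeasurable.smul hGc.aestronglyMeasurable) ?_
    filter_upwards [hball] with z hz
    rw [norm_smul]
    exact mul_le_mul_of_nonneg_left (hC z (ball_subset_closedBall hz)) (norm_nonneg _)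
  refine ⟨∫ z in ball (0 : ℂ) 1, ψ z • G z, ?_, ?_⟩
  · refine integral_smul_mem_of_norm_le_one (convex_convexHull ℝ K).closure isClosed_closure
      (hKS ⟨(0, 0), by simp, by simp⟩) hψ hψ1 hint ?_
    filter_upwards [hball] with z hz c hc
    exact hKS ⟨(c, z), ⟨by simpa using hc, ball_subset_closedBall hz⟩, rfl⟩
  · apply Lp.ext
    refine (BoundedContinuousFunction.coeFn_toLp (p := 1) (𝕜 := ℂ) _ _).trans
      (Filter.EventuallyEq.trans (Filter.Eventually.of_forall fun w => ?_) hf.symm)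
    -- evaluation at `w` is a continuous linear functional, so it commutes with the integral
    have hev := (BoundedContinuousFunction.evalCLM ℂ w : (ℂ →ᵇ ℂ) →L[ℂ] ℂ).integral_comp_comm hint
    rw [mollify_indicator_eq]
    refine hev.symm.trans ?_
    simp [hG]
end

section
/- Let X > 0, c > 0, K ∈ ℕ, and let u : ℝ² → ℝ^K be a C¹ map which is 2π-periodic in its second variable, i.e. u(x, θ + 2π) = u(x, θ) for all (x, θ). Suppose that for every x ∈ [−X, X] the closed curve θ ↦ u(x, θ) has length at least c, i.e. ∫₀^{2π} |∂_θ u(x, θ)| dθ ≥ c. Then the Dirichlet energy of u on the cylinder satisfies ½ ∫_{−X}^{X} ∫₀^{2π} (|∂_x u(x,θ)|² + |∂_θ u(x,θ)|²) dθ dx ≥ c² X / (2π). -/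
open MeasureTheory

/-!
On each circle `{x} × [0, 2π]`, put `b = |∂_θ u|` and `t = c / (2π)`. Dropping `|∂_x u|²` and
integrating `b² ≥ 2 t b - t²` gives `∫ (|∂_x u|² + b²) dθ ≥ 2 t c - 2π t² = c² / (2π)`; this is
the Cauchy–Schwarz inequality between length and energy in linearised form. Integrating over
`x ∈ [-X, X]`, an interval of length `2X`, and halving gives the claim.
-/

/-- Let `X > 0`, `c > 0`, and let `u : ℝ² → ℝ^K` be a `C¹` map which is
`2π`-periodic in its second variable. If for every `x ∈ [−X, X]` the closed curve
`θ ↦ u(x, θ)` has length at least `c`, then the Dirichlet energy of `u` on the cylinder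
`[−X, X] × [0, 2π]` is at least `c² X/(2π)`. -/
theorem stmt_11 (X c : ℝ) (hX : 0 < X) (hc : 0 < c) (K : ℕ)
    (u : ℝ × ℝ → EuclideanSpace ℝ (Fin K)) (hu : ContDiff ℝ 1 u)
    (hper : ∀ x θ : ℝ, u (x, θ + 2 * Real.pi) = u (x, θ))
    (hlen : ∀ x ∈ Set.Icc (-X) X,
      c ≤ ∫ θ in (0 : ℝ)..(2 * Real.pi), ‖fderiv ℝ u (x, θ) (0, 1)‖) :
    c ^ 2 * X / (2 * Real.pi) ≤ (1 / 2) * ∫ x in (-X)..X,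
      ∫ θ in (0 : ℝ)..(2 * Real.pi),
        (‖fderiv ℝ u (x, θ) (1, 0)‖ ^ 2 + ‖fderiv ℝ u (x, θ) (0, 1)‖ ^ 2) := by
  have hpi : (0 : ℝ) < 2 * Real.pi := by positivity
  have hD : Continuous (fderiv ℝ u) := hu.continuous_fderiv one_ne_zero
  have hcont : Continuous fun p : ℝ × ℝ =>
      ‖fderiv ℝ u p (1, 0)‖ ^ 2 + ‖fderiv ℝ u p (0, 1)‖ ^ 2 := by fun_prop
  have hslice : ∀ x ∈ Set.Icc (-X) X, c ^ 2 / (2 * Real.pi) ≤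
      ∫ θ in (0 : ℝ)..(2 * Real.pi),
        (‖fderiv ℝ u (x, θ) (1, 0)‖ ^ 2 + ‖fderiv ℝ u (x, θ) (0, 1)‖ ^ 2) := by
    intro x hx
    set t : ℝ := c / (2 * Real.pi) with ht
    have htpos : 0 < t := by positivity
    have hb : Continuous fun θ : ℝ => ‖fderiv ℝ u (x, θ) (0, 1)‖ := by fun_prop
    have hmono : ∫ θ in (0 : ℝ)..(2 * Real.pi),
          (2 * t * ‖fderiv ℝ u (x, θ) (0, 1)‖ - t ^ 2) ≤
        ∫ θ in (0 : ℝ)..(2 * Real.pi),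
          (‖fderiv ℝ u (x, θ) (1, 0)‖ ^ 2 + ‖fderiv ℝ u (x, θ) (0, 1)‖ ^ 2) := by
      apply intervalIntegral.integral_mono_on hpi.le
      · exact Continuous.intervalIntegrable (by fun_prop) _ _
      · exact Continuous.intervalIntegrable (by fun_prop) _ _
      · intro θ _
        nlinarith [sq_nonneg (‖fderiv ℝ u (x, θ) (0, 1)‖ - t),
          sq_nonneg ‖fderiv ℝ u (x, θ) (1, 0)‖]
    rw [intervalIntegral.integral_sub
      (Continuous.intervalIntegrable (by fun_prop) _ _)
      (Continuous.intervalIntegrable (by fun_prop) _ _),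
      intervalIntegral.integral_const_mul, intervalIntegral.integral_const,
      smul_eq_mul, sub_zero] at hmono
    have hl := mul_le_mul_of_nonneg_left (hlen x hx) (by positivity : 0 ≤ 2 * t)
    have he : c ^ 2 / (2 * Real.pi) = 2 * t * c - 2 * Real.pi * t ^ 2 := by
      rw [ht]; field_simp; ring
    linarith
  have hint := intervalIntegral.integral_mono_on (by linarith : -X ≤ X)
    (continuous_const.intervalIntegrable (μ := volume) _ _)
    ((intervalIntegral.continuous_parametric_intervalIntegral_of_continuous'
      (f := fun x θ : ℝ =>
        ‖fderiv ℝ u (x, θ) (1, 0)‖ ^ 2 + ‖fderiv ℝ u (x, θ) (0, 1)‖ ^ 2)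
      hcont 0 (2 * Real.pi)).intervalIntegrable _ _) hslice
  rw [intervalIntegral.integral_const, smul_eq_mul] at hint
  have he : c ^ 2 * X / (2 * Real.pi) =
      1 / 2 * ((X - -X) * (c ^ 2 / (2 * Real.pi))) := by ring
  rw [he]
  exact mul_le_mul_of_nonneg_left hint (by norm_num)
end

section
/- Fix real numbers α, α̇, β̇ and β ≠ 0, and for s in a neighbourhood of 0 (where β + sβ̇ ≠ 0) set M(s) := L(α + sα̇, β + sβ̇) · L(α, β)⁻¹ and g(s) := M(s)ᵀ M(s) (the matrix of the pullback of the Euclidean metric by M(s)). Then s ↦ g(s) is differentiable at s = 0 with derivative equal to the trace-free symmetric 2×2 matrix with rows (−2β̇/β, αβ̇/β² + α̇/β) and (αβ̇/β² + α̇/β, 2β̇/β); equivalently, as a quadratic form this derivative is Re[(−2β̇/β − i(αβ̇/β² + α̇/β)) dz²], the real part of a constant (hence holomorphic) quadratic differential. -/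
/-!
Since `M(0) = 1`, the product rule gives `g'(0) = M'(0)ᵀ + M'(0)`. The matrix `M(s)` is upper
triangular with explicit entries (`Lmat_mul_inv`), so `M'(0)` is computed entry by entry
(`hasDerivAt_Lmat_mul_inv`). The second claim compares real and imaginary parts.
-/

open Matrix

/-- The matrix `L(a, b)` of the linear map sending `(1,0)` to `(1/b, 0)` and `(0,1)` to
`(a, b)`. -/
noncomputable def Lmat (a b : ℝ) : Matrix (Fin 2) (Fin 2) ℝ := !![1 / b, a; 0, b]

/-- The matrix of the real part of the quadratic differential `θ dz²` on `ℝ² ≅ ℂ`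
(with `dz² = dx² − dy² + 2i dx dy`). -/
def Mquad (θ : ℂ) : Matrix (Fin 2) (Fin 2) ℝ := !![θ.re, -θ.im; -θ.im, -θ.re]

/-- `M(s) = L(α + sα̇, β + sβ̇) · L(α, β)⁻¹` in closed form. The identity also holds at an `s` with
`β + sβ̇ = 0`, where both sides use the same junk value of the division. -/
lemma Lmat_mul_inv (a b α β : ℝ) (hβ : β ≠ 0) :
    Lmat a b * (Lmat α β)⁻¹ = !![β / b, a / β - α / b; 0, b / β] := by
  have hinv : (Lmat α β)⁻¹ = !![β, -α; 0, 1 / β] := by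
    apply Matrix.inv_eq_right_inv
    ext i j
    fin_cases i <;> fin_cases j <;> simp [Lmat, Matrix.mul_apply, hβ]
    field_simp
    ring
  rw [hinv]
  ext i j
  fin_cases i <;> fin_cases j <;> simp [Lmat, Matrix.mul_apply, div_eq_mul_inv] <;> ring

/-- The entries of `M(s)` are differentiable at `0`, with upper triangular derivative. -/
lemma hasDerivAt_Lmat_mul_inv (α αd β βd : ℝ) (hβ : β ≠ 0) (i j : Fin 2) :
    HasDerivAt (fun s : ℝ => (Lmat (α + s * αd) (β + s * βd) * (Lmat α β)⁻¹) i j)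
      ((!![-βd / β, α * βd / β ^ 2 + αd / β; 0, βd / β] : Matrix (Fin 2) (Fin 2) ℝ) i j) 0 := by
  simp only [Lmat_mul_inv _ _ α β hβ]
  have ha : HasDerivAt (fun s : ℝ => α + s * αd) αd 0 := by
    simpa using ((hasDerivAt_id (0 : ℝ)).mul_const αd).const_add α
  have hb : HasDerivAt (fun s : ℝ => β + s * βd) βd 0 := by
    simpa using ((hasDerivAt_id (0 : ℝ)).mul_const βd).const_add β
  have hb0 : β + 0 * βd ≠ 0 := by simpa using hβ
  have hdiv (c : ℝ) : HasDerivAt (fun s : ℝ => c / (β + s * βd)) (-(c * βd) / β ^ 2) 0 := by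
    simpa using (hasDerivAt_const (0 : ℝ) c).fun_div hb hb0
  fin_cases i <;> fin_cases j <;> simp
  · refine (hdiv β).congr_deriv ?_
    field_simp
  · refine ((ha.div_const β).fun_sub (hdiv α)).congr_deriv ?_
    ring
  · exact hasDerivAt_const _ _
  · exact hb.div_const β

/-- For fixed `α, α̇, β̇` and `β ≠ 0`, with
`M(s) := L(α + sα̇, β + sβ̇)·L(α, β)⁻¹` and `g(s) := M(s)ᵀ M(s)`, the map `s ↦ g(s)` is
differentiable (entrywise) at `s = 0`, with derivative the trace-free symmetric matrix with
rows `(−2β̇/β, αβ̇/β² + α̇/β)` and `(αβ̇/β² + α̇/β, 2β̇/β)`; equivalently, this derivative is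
`Re[(−2β̇/β − i(αβ̇/β² + α̇/β)) dz²]`, the real part of a constant holomorphic quadratic
differential. -/
theorem stmt_14 (α αd β βd : ℝ) (hβ : β ≠ 0) :
    (∀ i j : Fin 2,
      HasDerivAt (fun s : ℝ =>
          ((Lmat (α + s * αd) (β + s * βd) * (Lmat α β)⁻¹)ᵀ *
            (Lmat (α + s * αd) (β + s * βd) * (Lmat α β)⁻¹)) i j)
        ((!![-2 * βd / β, α * βd / β ^ 2 + αd / β;
             α * βd / β ^ 2 + αd / β, 2 * βd / β] : Matrix (Fin 2) (Fin 2) ℝ) i j)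
        0) ∧
    (!![-2 * βd / β, α * βd / β ^ 2 + αd / β;
        α * βd / β ^ 2 + αd / β, 2 * βd / β] : Matrix (Fin 2) (Fin 2) ℝ)
      = Mquad (-2 * βd / β - Complex.I * (α * βd / β ^ 2 + αd / β)) := by
  constructor
  · intro i j
    have hM := hasDerivAt_Lmat_mul_inv α αd β βd hβ
    have hM0 : Lmat (α + 0 * αd) (β + 0 * βd) * (Lmat α β)⁻¹ = 1 := by
      rw [Lmat_mul_inv _ _ α β hβ]
      ext i j
      fin_cases i <;> fin_cases j <;> simp [hβ]
    have h := HasDerivAt.fun_sum (u := Finset.univ) fun k _ => (hM k i).fun_mul (hM k j)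
    simp only [hM0] at h
    simp only [Matrix.mul_apply (M := (_)ᵀ), Matrix.transpose_apply]
    refine h.congr_deriv ?_
    fin_cases i <;> fin_cases j <;> simp [Fin.sum_univ_two, Matrix.one_apply] <;> ring
  · have hθ : (-2 * βd / β - Complex.I * (α * βd / β ^ 2 + αd / β) : ℂ)
        = ⟨-2 * βd / β, -(α * βd / β ^ 2 + αd / β)⟩ := by
      rw [Complex.mk_eq_add_mul_I]
      push_cast
      ring
    rw [hθ]
    ext i j
    fin_cases i <;> fin_cases j <;> simp [Mquad] <;> ring
end
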